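/- arXiv:2211.15818 — 3 statements merged into one kernel-verified Lean document; each statement's English description precedes it below -/
import Mathlib

section
/- Let G be a finite pseudo-solvable group. Then the complement Γ̄(G) of its prime graph is 3-colorable, and exactly one of the following three statements holds: (1) Γ̄(G) is triangle-free, i.e., there do not exist three distinct primes p, q, r dividing |G| such that G has no element of order pq, no element of order pr, and no element of order qr; (2) 2, 3, 5 all divide |G| and G has no element of order 6, 10, or 15; (3) there exists a prime p ∉ {2,3,5} dividing |G| such that 3 and 5 divide |G| and G has no element of order 3p, no element of order 5p, and no element of order 15. -/
/-- A finite group is *pseudo-solvable* if it has a subnormal series whose factors are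
all cyclic or isomorphic to the alternating group `A₅`. -/
def IsPseudoSolvable (G : Type*) [Group G] : Prop :=
  ∃ (n : ℕ) (H : Fin (n + 1) → Subgroup G),
    H 0 = ⊥ ∧ H (Fin.last n) = ⊤ ∧
    ∀ i : Fin n, H i.castSucc ≤ H i.succ ∧
      ∃ hN : ((H i.castSucc).subgroupOf (H i.succ)).Normal,
        haveI := hN
        IsCyclic (H i.succ ⧸ (H i.castSucc).subgroupOf (H i.succ)) ∨
        Nonempty ((H i.succ ⧸ (H i.castSucc).subgroupOf (H i.succ)) ≃* alternatingGroup (Fin 5))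

/-- The complement of the prime graph of `G` is triangle-free. -/
def ComplementTriangleFree (G : Type*) [Group G] : Prop :=
  ¬ ∃ p q r : ℕ, p.Prime ∧ q.Prime ∧ r.Prime ∧ p ≠ q ∧ p ≠ r ∧ q ≠ r ∧
    p ∣ Nat.card G ∧ q ∣ Nat.card G ∧ r ∣ Nat.card G ∧
    (¬ ∃ g : G, orderOf g = p * q) ∧ (¬ ∃ g : G, orderOf g = p * r) ∧
    (¬ ∃ g : G, orderOf g = q * r)

/-- `{2,3,5}` is a triangle of the complement of the prime graph of `G`. -/
def Triangle235 (G : Type*) [Group G] : Prop :=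
  2 ∣ Nat.card G ∧ 3 ∣ Nat.card G ∧ 5 ∣ Nat.card G ∧
  (¬ ∃ g : G, orderOf g = 6) ∧ (¬ ∃ g : G, orderOf g = 10) ∧
  (¬ ∃ g : G, orderOf g = 15)

/-- `{p,3,5}` is a triangle of the complement of the prime graph of `G` for some
prime `p ∉ {2,3,5}`. -/
def TriangleP35 (G : Type*) [Group G] : Prop :=
  ∃ p : ℕ, p.Prime ∧ p ∉ ({2, 3, 5} : Set ℕ) ∧ p ∣ Nat.card G ∧
    3 ∣ Nat.card G ∧ 5 ∣ Nat.card G ∧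
    (¬ ∃ g : G, orderOf g = 3 * p) ∧ (¬ ∃ g : G, orderOf g = 5 * p) ∧
    (¬ ∃ g : G, orderOf g = 15)

lemma ps_lift_order {G H : Type*} [Group G] [Finite G] [Group H] (f : G →* H)
    (hf : Function.Surjective f) {n : ℕ} (h : ∃ y : H, orderOf y = n) :
    ∃ g : G, orderOf g = n := by
  obtain ⟨y, hy⟩ := h
  obtain ⟨g, rfl⟩ := hf y
  have hd : n ∣ orderOf g := hy ▸ orderOf_map_dvd f g
  exact ⟨g ^ (orderOf g / n), orderOf_pow_orderOf_div (orderOf_pos g).ne' hd⟩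

lemma ps_comm_order {G : Type*} [Group G] {p q : ℕ} (hp : p.Prime) (hq : q.Prime) (hpq : p ≠ q)
    {a b : G} (ha : orderOf a = p) (hb : orderOf b = q) (h : a * b = b * a) :
    ∃ g : G, orderOf g = p * q := by
  refine ⟨a * b, ?_⟩
  rw [Commute.orderOf_mul_eq_mul_orderOf_of_coprime h, ha, hb]
  rw [ha, hb]
  exact (Nat.coprime_primes hp hq).2 hpq

lemma ps_order_mk {G : Type*} [Group G] (L : Subgroup G) [L.Normal] {r : ℕ} (hr : r.Prime)
    (hL : ¬ r ∣ Nat.card L) {x : G} (hx : orderOf x = r) : orderOf (x : G ⧸ L) = r := by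
  have : Fact r.Prime := ⟨hr⟩
  apply orderOf_eq_prime
  · rw [← QuotientGroup.mk_pow, ← hx, pow_orderOf_eq_one, QuotientGroup.mk_one]
  · intro h
    apply hL
    rw [QuotientGroup.eq_one_iff] at h
    rw [← hx, ← Subgroup.orderOf_mk x h]
    exact orderOf_dvd_natCard _

lemma ps_pow_inj {G : Type*} [Group G] {x y : G} {r j : ℕ} (hx : x ^ r = 1) (hy : y ^ r = 1)
    (hj : Nat.Coprime j r) (h : x ^ j = y ^ j) : x = y := by
  have key : ∀ z : G, z ^ r = 1 → z = (z ^ j) ^ (j.gcdA r) := by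
    intro z hz
    have h1 := Nat.gcd_eq_gcd_ab j r
    rw [hj.gcd_eq_one] at h1
    calc z = z ^ ((1 : ℕ) : ℤ) := by simp
      _ = z ^ ((j : ℤ) * j.gcdA r + r * j.gcdB r) := by rw [h1]
      _ = _ := by rw [zpow_add, zpow_mul, zpow_mul]; simp [hz]
  rw [key x hx, key y hy, h]

/-- partition lemma -/
lemma ps_partition {G M : Type*} [Group G] [CommGroup M] (φ : G →* MulAut M)
    (B : Subgroup G) [Finite B] (x : G) (r : ℕ) (hr : r.Prime)
    (hxB : ∀ b ∈ B, x⁻¹ * b * x ∈ B)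
    (hord : ∀ b ∈ B, (b * x) ^ r = 1)
    (hfix : ∀ b ∈ B, ∀ m : M, φ (b * x) m = m → m = 1)
    (v : M) (hv : ∀ [Fintype B], ∏ b : B, φ b v = 1) : v ^ Nat.card B = 1 := by
  classical
  have := Fintype.ofFinite B
  have h1 : ∀ b : B, ∏ j ∈ Finset.range r, φ ((b * x) ^ j) v = 1 := by
    intro b
    apply hfix b b.2
    rw [map_prod]
    have : ∀ j, φ (b * x) (φ ((b * x) ^ j) v) = φ ((b * x) ^ (j + 1)) v := by
      intro j
      rw [pow_succ', map_mul φ (b * x), MulAut.mul_apply]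
    simp only [this]
    have e := Finset.prod_range_succ' (fun j => φ ((b * x) ^ j) v) r
    rw [Finset.prod_range_succ] at e
    simp only [hord b b.2, pow_zero] at e
    exact (mul_right_cancel e).symm
  have h2 : ∏ j ∈ Finset.range r, ∏ b : B, φ ((b * x) ^ j) v = 1 := by
    rw [Finset.prod_comm]
    exact Finset.prod_eq_one (fun b _ => h1 b)
  have hmem : ∀ (j : ℕ) (b : B), (x ^ j)⁻¹ * (b * x) ^ j ∈ B := by
    intro j b
    induction j with
    | zero => simp
    | succ j ih =>
      have : (x ^ (j + 1))⁻¹ * (b * x) ^ (j + 1) =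
        (x⁻¹ * ((x ^ j)⁻¹ * (b * x) ^ j) * x) * (x⁻¹ * b * x) := by
        rw [pow_succ, pow_succ]; group
      rw [this]
      exact mul_mem (hxB _ ih) (hxB _ b.2)
  have h3 : ∀ j ∈ Finset.range r, j ≠ 0 → ∏ b : B, φ ((b * x) ^ j) v = 1 := by
    intro j hj hj0
    have hinj : Function.Injective (fun b : B => (⟨_, hmem j b⟩ : B)) := by
      intro b c h
      simp only [Subtype.mk.injEq, mul_right_inj] at h
      have hc : Nat.Coprime j r :=
        (Nat.coprime_of_lt_prime hj0 (Finset.mem_range.1 hj) hr).symm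
      have := ps_pow_inj (hord b b.2) (hord c c.2) hc h
      exact Subtype.ext (mul_right_cancel this)
    have hbij := Finite.injective_iff_bijective.1 hinj
    have e : ∀ b : B, φ ((b * x) ^ j) v = φ (x ^ j) (φ ((⟨_, hmem j b⟩ : B) : G) v) := by
      intro b
      rw [← MulAut.mul_apply, ← map_mul]
      simp
    simp only [e]
    rw [← map_prod, hbij.prod_comp (fun c : B => φ (c : G) v), hv, map_one]
  rw [Finset.prod_eq_single 0 h3 (by simp [hr.pos.ne'])] at h2
  simpa [Nat.card_eq_fintype_card] using h2

/-- `V` is a nontrivial elementary abelian `p`-group, normal in `G`. -/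
structure PsElem {G : Type*} [Group G] (V : Subgroup G) (p : ℕ) : Prop where
  nor : V.Normal
  ne : V ≠ ⊥
  com : ∀ a ∈ V, ∀ b ∈ V, a * b = b * a
  exp : ∀ a ∈ V, a ^ p = 1

lemma ps_fix {G : Type*} [Group G] [Finite G] {L : Subgroup G} [L.Normal] {V : Subgroup (G ⧸ L)}
    {p r : ℕ} (hV : PsElem V p) (hp : p.Prime) (hr : r.Prime) (hpr : p ≠ r)
    (hL : ¬ r ∣ Nat.card L) {x : G} (hx : orderOf x = r) {v : G ⧸ L} (hv : v ∈ V) (hv1 : v ≠ 1)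
    (h : (x : G ⧸ L) * v = v * x) : ∃ g : G, orderOf g = p * r := by
  have : Fact p.Prime := ⟨hp⟩
  apply ps_lift_order (QuotientGroup.mk' L) (QuotientGroup.mk'_surjective L)
  exact ps_comm_order hp hr hpr (orderOf_eq_prime (hV.exp v hv) hv1) (ps_order_mk L hr hL hx) h.symm

lemma ps_pow_coprime {G : Type*} [Group G] {v : G} {p n : ℕ} (hp : p.Prime) (h1 : v ^ p = 1)
    (h2 : v ^ n = 1) (h : ¬ p ∣ n) : v = 1 := by
  have a := orderOf_dvd_of_pow_eq_one h1
  have b := orderOf_dvd_of_pow_eq_one h2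
  rcases (Nat.dvd_prime hp).1 a with h3 | h3
  · exact orderOf_eq_one_iff.1 h3
  · rw [h3] at b; exact absurd b h

/-- partition lemma for sections -/
lemma ps_partition_sec {G : Type*} [Group G] [Finite G] {L : Subgroup G} [L.Normal]
    {V : Subgroup (G ⧸ L)} {p : ℕ} (hV : PsElem V p) (hp : p.Prime)
    (B : Subgroup G) (x : G) (r : ℕ) (hr : r.Prime)
    (hxB : ∀ b ∈ B, x⁻¹ * b * x ∈ B)
    (hord : ∀ b ∈ B, (b * x) ^ r = 1)
    (hfix : ∀ b ∈ B, ∀ m ∈ V, ((b * x : G) : G ⧸ L) * m = m * (b * x : G) → m = 1)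
    (hB : ¬ p ∣ Nat.card B)
    (b₀ : G) (hb₀ : b₀ ∈ B) (v₀ : G ⧸ L) (hv₀ : v₀ ∈ V) :
    (b₀ : G ⧸ L) * v₀ = v₀ * b₀ := by
  classical
  have := hV.nor
  let _ : CommGroup V := { (inferInstance : Group V) with
    mul_comm := fun a b => Subtype.ext (hV.com a a.2 b b.2) }
  let φ : G →* MulAut V := (MulAut.conjNormal).comp (QuotientGroup.mk' L)
  have hφ : ∀ (g : G) (v : V), ((φ g v : V) : G ⧸ L) = (g : G ⧸ L) * v * (g : G ⧸ L)⁻¹ := by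
    intro g v
    simp [φ]
  let w : V := ⟨v₀, hv₀⟩
  have key := ps_partition φ B x r hr hxB hord (by
    intro b hb m hm
    have h1 := congrArg (Subtype.val) hm
    rw [hφ] at h1
    exact Subtype.ext (hfix b hb m m.2 (mul_inv_eq_iff_eq_mul.1 h1))) (φ b₀ w / w) (by
    intro _
    simp only [map_div, Finset.prod_div_distrib]
    rw [div_eq_one]
    have : ∀ b : B, φ b (φ b₀ w) = φ ((b * ⟨b₀, hb₀⟩ : B) : G) w := by
      intro b
      rw [Subgroup.coe_mul, map_mul, MulAut.mul_apply]
    simp only [this]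
    exact Equiv.prod_comp (Equiv.mulRight (⟨b₀, hb₀⟩ : B)) (fun c : B => φ (c : G) w))
  have h2 : (φ b₀ w / w) ^ p = 1 := Subtype.ext (hV.exp _ (φ b₀ w / w).2)
  have h3 := ps_pow_coprime hp h2 key hB
  have h4 := congrArg Subtype.val (div_eq_one.1 h3)
  rw [hφ] at h4
  exact mul_inv_eq_iff_eq_mul.1 h4

/-- Frobenius groups acting -/
lemma ps_frob {G : Type*} [Group G] [Finite G] {L : Subgroup G} [L.Normal]
    {V : Subgroup (G ⧸ L)} {p r : ℕ} (hV : PsElem V p) (hp : p.Prime) (hr : r.Prime) (hpr : p ≠ r)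
    (hL : ¬ r ∣ Nat.card L) (B : Subgroup G) (hB : ¬ p ∣ Nat.card B) (x : G) (hx : orderOf x = r)
    (hxB : ∀ b ∈ B, x * b * x⁻¹ ∈ B) (hfp : ∀ b ∈ B, b * x = x * b → b = 1)
    (b₀ : G) (hb₀ : b₀ ∈ B) (v₀ : G ⧸ L) (hv₀ : v₀ ∈ V) (hne : (b₀ : G ⧸ L) * v₀ ≠ v₀ * b₀) :
    ∃ g : G, orderOf g = p * r := by
  by_contra hcon
  have hconj : ∀ b ∈ B, orderOf (b * x) = r := by
    intro b hb
    let β : B → B := fun c => c * ⟨x * c⁻¹ * x⁻¹, hxB _ (inv_mem c.2)⟩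
    have hβ : Function.Injective β := by
      intro c d h
      have h1 : (c : G) * (x * (c : G)⁻¹ * x⁻¹) = d * (x * (d : G)⁻¹ * x⁻¹) := congrArg Subtype.val h
      have h2 : (d : G)⁻¹ * c * x = x * (d⁻¹ * c) := by
        have : (d : G)⁻¹ * (c * (x * (c : G)⁻¹ * x⁻¹)) * x * c =
            (d : G)⁻¹ * (d * (x * (d : G)⁻¹ * x⁻¹)) * x * c := by rw [h1]
        group at this ⊢
        exact this
      have h3 := hfp _ (mul_mem (inv_mem d.2) c.2) h2
      exact Subtype.ext (inv_mul_eq_one.1 h3).symm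
    obtain ⟨c, hc⟩ := (Finite.injective_iff_surjective.1 hβ) ⟨b, hb⟩
    have hc' : (c : G) * (x * (c : G)⁻¹ * x⁻¹) = b := congrArg Subtype.val hc
    have : b * x = MulAut.conj (c : G) x := by
      rw [← hc', MulAut.conj_apply]; group
    rw [this]
    rw [MulEquiv.orderOf_eq]; exact hx
  apply hne
  have hinv : ∀ b ∈ B, x⁻¹ * b * x ∈ B := by
    have : ∀ n : ℕ, ∀ b ∈ B, x ^ n * b * (x ^ n)⁻¹ ∈ B := by
      intro n
      induction n with
      | zero => simp
      | succ n ih =>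
        intro b hb
        have := hxB _ (ih b hb)
        rw [pow_succ']
        group at this ⊢
        exact this
    intro b hb
    have h1 := this (r - 1) b hb
    have h2 : x ^ (r - 1) = x⁻¹ := by
      rw [eq_inv_iff_mul_eq_one, ← pow_succ, Nat.sub_add_cancel hr.pos, ← hx, pow_orderOf_eq_one]
    rw [h2, inv_inv] at h1
    exact h1
  refine ps_partition_sec hV hp B x r hr hinv ?_ ?_ hB b₀ hb₀ v₀ hv₀
  · intro b hb
    rw [← hconj b hb, pow_orderOf_eq_one]
  · intro b hb m hm hm1
    by_contra hm0
    exact hcon (ps_fix hV hp hr hpr hL (hconj b hb) hm hm0 hm1)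

lemma ps_cauchy {G : Type*} [Group G] [Finite G] (K : Subgroup G) {r : ℕ} (hr : r.Prime)
    (h : r ∣ Nat.card K) : ∃ x ∈ K, orderOf x = r := by
  have : Fact r.Prime := ⟨hr⟩
  obtain ⟨x, hx⟩ := exists_prime_orderOf_dvd_card' (G := K) r h
  exact ⟨x, x.2, by rw [Subgroup.orderOf_coe, hx]⟩

lemma ps_dvd_card {G : Type*} [Group G] {K : Subgroup G} {x : G} (hx : x ∈ K) :
    orderOf x ∣ Nat.card K := by
  rw [← Subgroup.orderOf_mk x hx]
  exact orderOf_dvd_natCard _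

lemma ps_exp_card {G : Type*} [Group G] [Finite G] {K : Subgroup G} {p r : ℕ} (hp : p.Prime)
    (hr : r.Prime) (h : ∀ a ∈ K, a ^ p = 1) (hK : r ∣ Nat.card K) : r = p := by
  obtain ⟨x, hx, hxr⟩ := ps_cauchy K hr hK
  have := orderOf_dvd_of_pow_eq_one (h x hx)
  rw [hxr] at this
  exact (Nat.prime_dvd_prime_iff_eq hr hp).1 this

lemma ps_comap_card {G : Type*} [Group G] [Finite G] {L : Subgroup G} [L.Normal]
    {V : Subgroup (G ⧸ L)} {r : ℕ} (hr : r.Prime) (h1 : ¬ r ∣ Nat.card L)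
    (h2 : ¬ r ∣ Nat.card V) : ¬ r ∣ Nat.card (V.comap (QuotientGroup.mk' L)) := by
  intro h
  obtain ⟨x, hx, hxr⟩ := ps_cauchy _ hr h
  apply h2
  rw [← ps_order_mk L hr h1 hxr]
  exact ps_dvd_card hx

lemma ps_comap_dvd {G : Type*} [Group G] [Finite G] {L : Subgroup G} [L.Normal]
    {V : Subgroup (G ⧸ L)} {r : ℕ} (hr : r.Prime)
    (h2 : r ∣ Nat.card V) : r ∣ Nat.card (V.comap (QuotientGroup.mk' L)) := by
  obtain ⟨x, hx, hxr⟩ := ps_cauchy _ hr h2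
  obtain ⟨g, rfl⟩ := QuotientGroup.mk_surjective x
  have : g ∈ V.comap (QuotientGroup.mk' L) := hx
  refine dvd_trans ?_ (ps_dvd_card this)
  rw [← hxr]
  exact orderOf_map_dvd (QuotientGroup.mk' L) g

lemma PsElem.dvd {G : Type*} [Group G] {V : Subgroup G} {p : ℕ} (hV : PsElem V p)
    (hp : p.Prime) : p ∣ Nat.card V := by
  have : Fact p.Prime := ⟨hp⟩
  obtain ⟨v, hv, h1⟩ := (Subgroup.bot_or_exists_ne_one V).resolve_left hV.ne
  rw [← orderOf_eq_prime (hV.exp v hv) h1]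
  exact ps_dvd_card hv

lemma ps_frattini {G : Type*} [Group G] [Finite G] {K : Subgroup G} [K.Normal] {q r : ℕ}
    [Fact q.Prime] (P : Sylow q K) (hr : r.Prime) (h : r ∣ K.index) :
    ∃ x, orderOf x = r ∧ ∀ b ∈ P.map K.subtype, x * b * x⁻¹ ∈ P.map K.subtype := by
  have hF := Sylow.normalizer_sup_eq_top P
  have hN : r ∣ Nat.card (Subgroup.normalizer (P.map K.subtype : Set G)) := by
    rw [← Subgroup.relIndex_top_right, ← hF, Subgroup.relIndex_sup_right] at h
    exact h.trans (Subgroup.relIndex_dvd_card _ _)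
  obtain ⟨x, hx, hxr⟩ := ps_cauchy _ hr hN
  exact ⟨x, hxr, fun b hb => (Subgroup.mem_normalizer_iff.1 hx b).1 hb⟩

lemma ps_sylow_lift {G : Type*} [Group G] [Finite G] {L : Subgroup G} [L.Normal]
    {W : Subgroup (G ⧸ L)} {q : ℕ} (hW : PsElem W q) (hq : q.Prime) (hL : ¬ q ∣ Nat.card L) :
    ∃ B : Subgroup G, (∀ b ∈ B, (b : G ⧸ L) ∈ W) ∧ (∀ w ∈ W, ∃ b ∈ B, (b : G ⧸ L) = w) ∧
      (∀ b ∈ B, b ^ q = 1) ∧ (∀ a ∈ B, ∀ b ∈ B, a * b = b * a) ∧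
      (∀ r : ℕ, r.Prime → r ∣ Nat.card G → ¬ r ∣ Nat.card L → r ≠ q →
        ∃ x, orderOf x = r ∧ ∀ b ∈ B, x * b * x⁻¹ ∈ B) := by
  have : Fact q.Prime := ⟨hq⟩
  have := hW.nor
  let K : Subgroup G := W.comap (QuotientGroup.mk' L)
  have hKn : K.Normal := inferInstance
  let f : K →* W := ((QuotientGroup.mk' L).comp K.subtype).codRestrict W (fun x => x.2)
  have hf : Function.Surjective f := by
    rintro ⟨w, hw⟩
    obtain ⟨g, rfl⟩ := QuotientGroup.mk_surjective w
    exact ⟨⟨g, hw⟩, rfl⟩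
  obtain ⟨P⟩ : Nonempty (Sylow q K) := inferInstance
  have hP : P.map f = ⊤ := by
    have h1 : IsPGroup q W := by
      intro w
      exact ⟨1, by rw [pow_one]; exact Subtype.ext (hW.exp w w.2)⟩
    have h2 : IsPGroup q (⊤ : Subgroup W) := h1.to_subgroup ⊤
    have h3 := (P.mapSurjective hf).is_maximal' h2 le_top
    rw [Sylow.coe_mapSurjective] at h3
    exact h3.symm
  let B : Subgroup G := P.map K.subtype
  have hB1 : ∀ b ∈ B, (b : G ⧸ L) ∈ W := by
    rintro b ⟨k, hk, rfl⟩
    exact k.2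
  have hBinj : ∀ b ∈ B, (b : G ⧸ L) = 1 → b = 1 := by
    rintro b ⟨k, hk, rfl⟩ h
    rw [QuotientGroup.eq_one_iff] at h
    by_contra hne
    obtain ⟨n, hn⟩ := (IsPGroup.iff_orderOf.1 P.isPGroup') ⟨k, hk⟩
    rw [← Subgroup.orderOf_coe, ← Subgroup.orderOf_coe] at hn
    simp only [Subgroup.subtype_apply] at h hne
    have h2 := ps_dvd_card h
    rw [hn] at h2
    rcases Nat.eq_zero_or_pos n with h0 | h0
    · subst h0
      rw [pow_zero, orderOf_eq_one_iff] at hn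
      exact hne hn
    · exact hL ((dvd_pow_self q h0.ne').trans h2)
  refine ⟨B, hB1, ?_, ?_, ?_, ?_⟩
  · intro w hw
    have : (⟨w, hw⟩ : W) ∈ P.map f := by rw [hP]; trivial
    obtain ⟨k, hk, hkw⟩ := this
    exact ⟨k, ⟨k, hk, rfl⟩, congrArg Subtype.val hkw⟩
  · intro b hb
    apply hBinj _ (pow_mem hb q)
    rw [QuotientGroup.mk_pow]
    exact hW.exp _ (hB1 b hb)
  · intro a ha b hb
    have h1 := hBinj (a * b * (b * a)⁻¹) (mul_mem (mul_mem ha hb) (inv_mem (mul_mem hb ha))) (by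
      rw [QuotientGroup.mk_mul, QuotientGroup.mk_inv, QuotientGroup.mk_mul, QuotientGroup.mk_mul,
        hW.com _ (hB1 a ha) _ (hB1 b hb), mul_inv_cancel])
    exact mul_inv_eq_one.1 h1
  · intro r hr hrG hrL hrq
    have hrK : ¬ r ∣ Nat.card K :=
      ps_comap_card hr hrL (fun h => hrq (ps_exp_card hq hr hW.exp h))
    have hidx : r ∣ K.index := by
      rw [← K.card_mul_index] at hrG
      exact ((hr.dvd_mul).1 hrG).resolve_left hrK
    exact ps_frattini P hr hidx

def PsArr (G : Type*) [Group G] (p q : ℕ) : Prop :=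
  ∃ (L : Subgroup G) (_ : L.Normal) (V : Subgroup (G ⧸ L)),
    PsElem V p ∧ ¬ p ∣ Nat.card L ∧ ¬ q ∣ Nat.card L

lemma ps_chain {G : Type*} [Group G] [Finite G] {p q r : ℕ} (hp : p.Prime) (hq : q.Prime)
    (hr : r.Prime) (hpq : p ≠ q) (hqr : q ≠ r) (hrG : r ∣ Nat.card G) (h1 : PsArr G p q)
    (h2 : PsArr G q r) (e1 : ¬ ∃ g : G, orderOf g = p * q) (e2 : ¬ ∃ g : G, orderOf g = q * r) :
    (∃ C : Subgroup G, C.Normal ∧ (∀ g h : G, g * h * (h * g)⁻¹ ∈ C) ∧ ¬ r ∣ Nat.card C) ∧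
      (p ≠ r → ∃ g : G, orderOf g = p * r) := by
  have : Fact q.Prime := ⟨hq⟩
  obtain ⟨L₁, hn₁, V, hV, hpL₁, hqL₁⟩ := h1
  obtain ⟨L₂, hn₂, W, hW, hqL₂, hrL₂⟩ := h2
  have := hV.nor
  have := hW.nor
  obtain ⟨B, hB1, hB2, hB3, hB4, hB5⟩ := ps_sylow_lift hW hq hqL₂
  obtain ⟨w, hw, hw1⟩ := (Subgroup.bot_or_exists_ne_one W).resolve_left hW.ne
  obtain ⟨v, hv, hv1⟩ := (Subgroup.bot_or_exists_ne_one V).resolve_left hV.ne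
  obtain ⟨a, ha, haw⟩ := hB2 w hw
  have hordB : ∀ b ∈ B, b ≠ 1 → orderOf b = q := fun b hb h => orderOf_eq_prime (hB3 b hb) h
  have ha1 : a ≠ 1 := by
    rintro rfl
    exact hw1 (by rw [← haw]; rfl)
  -- nonidentity elements of B act fixed-point-freely on V
  have hfpB : ∀ b ∈ B, b ≠ 1 → ∀ m ∈ V, (b : G ⧸ L₁) * m = m * b → m = 1 := by
    intro b hb hb1 m hm hc
    by_contra hm1
    exact e1 (ps_fix hV hp hq hpq hqL₁ (hordB b hb hb1) hm hm1 hc)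
  have hcyc : ∀ b ∈ B, b ∈ Subgroup.zpowers a := by
    intro b hb
    by_contra hba
    have hzB : ∀ c ∈ Subgroup.zpowers a, c ∈ B := fun c hc => (Subgroup.zpowers_le.2 ha) hc
    have := ps_partition_sec hV hp (Subgroup.zpowers a) b q hq (by
      intro c hc
      rw [mul_assoc, hB4 c (hzB c hc) b hb, inv_mul_cancel_left]
      exact hc) (fun c hc => hB3 _ (mul_mem (hzB c hc) hb)) (by
      intro c hc
      apply hfpB _ (mul_mem (hzB c hc) hb)
      intro h
      apply hba
      rw [eq_inv_of_mul_eq_one_right h]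
      exact inv_mem hc) (by
      rw [Nat.card_zpowers, hordB a ha ha1]
      exact fun h => hpq ((Nat.prime_dvd_prime_iff_eq hp hq).1 h)) a (Subgroup.mem_zpowers a) v hv
    exact hv1 (hfpB a ha ha1 v hv this)
  have hWc : IsCyclic W := by
    refine ⟨⟨⟨w, hw⟩, fun u => ?_⟩⟩
    obtain ⟨b, hb, hbu⟩ := hB2 u u.2
    obtain ⟨n, hn⟩ := Subgroup.mem_zpowers_iff.1 (hcyc b hb)
    refine ⟨n, Subtype.ext ?_⟩
    rw [← hbu, ← hn, QuotientGroup.mk_zpow, haw]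
    rfl
  let φ : G →* MulAut W := (MulAut.conjNormal).comp (QuotientGroup.mk' L₂)
  have hφ : ∀ (g : G), g ∈ φ.ker ↔ ∀ u ∈ W, (g : G ⧸ L₂) * u = u * g := by
    intro g
    rw [MonoidHom.mem_ker]
    constructor
    · intro h u hu
      have := congrArg Subtype.val (DFunLike.congr_fun h (⟨u, hu⟩ : W))
      simp only [φ, MonoidHom.comp_apply, MulAut.conjNormal_apply] at this
      exact mul_inv_eq_iff_eq_mul.1 this
    · intro h
      ext u
      simp only [φ, MonoidHom.comp_apply, MulAut.conjNormal_apply]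
      exact mul_inv_eq_iff_eq_mul.2 (h u u.2)
  have hrC : ¬ r ∣ Nat.card φ.ker := by
    intro h
    obtain ⟨x, hx, hxr⟩ := ps_cauchy _ hr h
    exact e2 (ps_fix hW hq hr hqr hrL₂ hxr hw hw1 ((hφ x).1 hx w hw))
  refine ⟨⟨φ.ker, inferInstance, ?_, hrC⟩, ?_⟩
  · intro g h
    rw [MonoidHom.mem_ker, map_mul, map_inv, map_mul, map_mul, mul_inv_eq_one]
    apply (IsCyclic.mulAutMulEquiv W).injective
    rw [map_mul, map_mul, mul_comm]
  · intro hpr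
    have hK1 : V.comap (QuotientGroup.mk' L₁) ≤ φ.ker := by
      intro k hk
      rw [hφ]
      intro u hu
      obtain ⟨y, rfl⟩ := QuotientGroup.mk_surjective u
      have hc1 : k * y * (y * k)⁻¹ ∈ V.comap (QuotientGroup.mk' L₁) := by
        have : k * y * (y * k)⁻¹ = k * (y * k⁻¹ * y⁻¹) := by group
        rw [this]
        exact mul_mem hk (Subgroup.Normal.conj_mem inferInstance _ (inv_mem hk) _)
      have hc2 : ((k * y * (y * k)⁻¹ : G) : G ⧸ L₂) ∈ W := by
        have : k * y * (y * k)⁻¹ = (k * y * k⁻¹) * y⁻¹ := by group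
        rw [this]
        exact mul_mem (hW.nor.conj_mem _ hu k) (inv_mem hu)
      have hqK : ¬ q ∣ Nat.card (V.comap (QuotientGroup.mk' L₁)) :=
        ps_comap_card hq hqL₁ (fun h => hpq (ps_exp_card hp hq hV.exp h).symm)
      have h3 : ((k * y * (y * k)⁻¹ : G) : G ⧸ L₂) = 1 := by
        refine ps_pow_coprime hq (hW.exp _ hc2) ?_ hqK
        rw [← QuotientGroup.mk_pow]
        rw [orderOf_dvd_iff_pow_eq_one.1 (ps_dvd_card hc1)]
        rfl
      rw [QuotientGroup.mk_mul, QuotientGroup.mk_inv, mul_inv_eq_one] at h3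
      exact h3
    have hrL₁ : ¬ r ∣ Nat.card L₁ := by
      intro h
      obtain ⟨x, hx, hxr⟩ := ps_cauchy _ hr h
      apply hrC
      rw [← hxr]
      apply ps_dvd_card
      apply hK1
      change (x : G ⧸ L₁) ∈ V
      rw [(QuotientGroup.eq_one_iff x).2 hx]
      exact one_mem _
    obtain ⟨x, hxr, hxB⟩ := hB5 r hr hrG hrL₂ hqr.symm
    refine ps_frob hV hp hr hpr hrL₁ B (fun h => hpq (ps_exp_card hq hp hB3 h)) x hxr hxB ?_
      a ha v hv (fun h => hv1 (hfpB a ha ha1 v hv h))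
    intro b hb hc
    by_contra hb1
    exact e2 (ps_comm_order hq hr hqr (hordB b hb hb1) hxr hc)

lemma ps_chain4 {G : Type*} [Group G] [Finite G] {p q r s : ℕ} (hp : p.Prime) (hq : q.Prime)
    (hr : r.Prime) (hs : s.Prime) (hpq : p ≠ q) (hqr : q ≠ r) (hrs : r ≠ s)
    (hrG : r ∣ Nat.card G) (hsG : s ∣ Nat.card G) (h1 : PsArr G p q)
    (h2 : PsArr G q r) (h3 : PsArr G r s)
    (e1 : ¬ ∃ g : G, orderOf g = p * q) (e2 : ¬ ∃ g : G, orderOf g = q * r)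
    (e3 : ¬ ∃ g : G, orderOf g = r * s) : False := by
  obtain ⟨⟨C, hC, hcomm, hrC⟩, -⟩ := ps_chain hp hq hr hpq hqr hrG h1 h2 e1 e2
  obtain ⟨L, hL, X, hX, hrL, hsL⟩ := h3
  have := hX.nor
  let K := X.comap (QuotientGroup.mk' L)
  have hKn : K.Normal := inferInstance
  have hsK : ¬ s ∣ Nat.card K :=
    ps_comap_card hs hsL (fun h => hrs (ps_exp_card hr hs hX.exp h).symm)
  have hrK : r ∣ Nat.card K := ps_comap_dvd hr (hX.dvd hr)
  obtain ⟨k, hk, hkr⟩ := ps_cauchy K hr hrK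
  have : Fact s.Prime := ⟨hs⟩
  obtain ⟨y, hys⟩ := exists_prime_orderOf_dvd_card' (G := G) s hsG
  let D := K ⊓ C
  have hD : D.Normal := inferInstance
  have hrD : ¬ r ∣ Nat.card D := fun h => hrC (h.trans (Subgroup.card_dvd_of_le inf_le_right))
  have hsD : ¬ s ∣ Nat.card D := fun h => hsK (h.trans (Subgroup.card_dvd_of_le inf_le_left))
  apply e3
  apply ps_lift_order (QuotientGroup.mk' D) (QuotientGroup.mk'_surjective D)
  refine ps_comm_order hr hs hrs (ps_order_mk D hr hrD hkr) (ps_order_mk D hs hsD hys) ?_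
  rw [← mul_inv_eq_one, ← QuotientGroup.mk_mul, ← QuotientGroup.mk_mul, ← QuotientGroup.mk_inv,
    ← QuotientGroup.mk_mul, QuotientGroup.eq_one_iff]
  refine ⟨?_, hcomm k y⟩
  have : k * y * (y * k)⁻¹ = k * (y * k⁻¹ * y⁻¹) := by group
  rw [this]
  exact mul_mem hk (hKn.conj_mem _ (inv_mem hk) _)

lemma ps_small {A : Type*} [Group A] [Finite A] [IsSimpleGroup A] (hA : ¬ ∀ a b : A, a * b = b * a)
    (h : Nat.card A ∣ 60) : Nat.card A = 60 := by
  rw [IsSimpleGroup.comm_iff_isSolvable] at hA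
  have hsq : ¬ Squarefree (Nat.card A) := by
    intro h1
    have := IsZGroup.of_squarefree h1
    exact hA inferInstance
  have hsyl : ∀ p : ℕ, p.Prime → p ∣ Nat.card A → ¬ (∀ m, m ∣ Nat.card A → ¬ p ∣ m → m % p = 1 % p → m.factorial < Nat.card A) := by
    intro p hp hpA H
    have : Fact p.Prime := ⟨hp⟩
    obtain ⟨P⟩ : Nonempty (Sylow p A) := inferInstance
    have h1 := H _ (Sylow.card_dvd_index P |>.trans (Subgroup.index_dvd_card _))
      (not_dvd_card_sylow p A) (card_sylow_modEq_one p A)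
    let φ := MulAction.toPermHom A (Sylow p A)
    rcases (inferInstance : φ.ker.Normal).eq_bot_or_eq_top with h2 | h2
    · have h3 : Function.Injective φ := (MonoidHom.ker_eq_bot_iff φ).1 h2
      have h4 := Nat.card_le_card_of_injective _ h3
      rw [Nat.card_perm] at h4
      omega
    · have h3 : P.Normal := by
        rw [← Subgroup.normalizer_eq_top_iff, eq_top_iff]
        intro g _
        have h4 : g ∈ φ.ker := h2 ▸ Subgroup.mem_top g
        rw [MonoidHom.mem_ker] at h4
        exact Sylow.smul_eq_iff_mem_normalizer.1 (DFunLike.congr_fun h4 P)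
      rcases h3.eq_bot_or_eq_top with h4 | h4
      · exact P.ne_bot_of_dvd_card hpA h4
      · apply hA
        have h5 : IsPGroup p A := by
          have := P.isPGroup'
          rw [h4] at this
          exact this.of_equiv Subgroup.topEquiv
        have := h5.isNilpotent
        infer_instance
  have hle : Nat.card A ∈ Nat.divisors 60 := by simp [h]
  have : Nat.divisors 60 = {1,2,3,4,5,6,10,12,15,20,30,60} := by decide +kernel
  rw [this] at hle
  simp only [Finset.mem_insert, Finset.mem_singleton] at hle
  have hne : Nat.card A ≠ 4 := by
    intro h4
    refine hsyl 2 (by norm_num) (by rw [h4]; norm_num) ?_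
    rw [h4]
    intro m hm
    have := Nat.le_of_dvd (by norm_num) hm
    interval_cases m <;> simp_all [Nat.factorial]
  have hne : Nat.card A ≠ 12 := by
    intro h4
    refine hsyl 2 (by norm_num) (by rw [h4]; norm_num) ?_
    rw [h4]
    intro m hm
    have := Nat.le_of_dvd (by norm_num) hm
    interval_cases m <;> revert hm <;> simp +decide
  have hne : Nat.card A ≠ 20 := by
    intro h4
    refine hsyl 5 (by norm_num) (by rw [h4]; norm_num) ?_
    rw [h4]
    intro m hm
    have := Nat.le_of_dvd (by norm_num) hm
    interval_cases m <;> revert hm <;> simp +decide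
  have key : ∀ n, Nat.card A = n → ¬ Squarefree n := by rintro n rfl; exact hsq
  rcases hle with h | h | h | h | h | h | h | h | h | h | h | h
  all_goals first
    | exact h
    | exact absurd h (by assumption)
    | exact absurd (by decide +kernel) (key _ h)

lemma ps_simple {G H : Type*} [Group G] [Finite G] [Group H] [Finite H] (hG : IsPseudoSolvable G)
    (f : G →* H) (hf : Function.Surjective f) (A : Subgroup H) [IsSimpleGroup A]
    (hA : ¬ ∀ a b : A, a * b = b * a) : Nonempty (A ≃* alternatingGroup (Fin 5)) := by
  obtain ⟨n, S, h0, hlast, hS⟩ := hG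
  obtain ⟨i, hi1, hi2⟩ : ∃ i : Fin n, A ≤ (S i.succ).map f ∧ ¬ A ≤ (S i.castSucc).map f := by
    by_contra hcon
    push Not at hcon
    have hall : ∀ i : Fin (n + 1), A ≤ (S i).map f := by
      intro i
      induction i using Fin.reverseInduction with
      | last => rw [hlast, Subgroup.map_top_of_surjective f hf]; exact le_top
      | cast i ih => exact hcon i ih
    have h1 := hall 0
    rw [h0, Subgroup.map_bot, le_bot_iff] at h1
    subst h1
    exact hA (fun a b => Subsingleton.elim _ _)
  obtain ⟨hle, hN, hq⟩ := hS i
  generalize S i.succ = K at *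
  generalize S i.castSucc = T at *
  let Y : Subgroup K := (A.comap f).subgroupOf K
  let g : Y →* A := ((f.comp K.subtype).comp Y.subtype).codRestrict A (fun y => y.2)
  have hg : Function.Surjective g := by
    rintro ⟨a, ha⟩
    obtain ⟨k, hk, hka⟩ := hi1 ha
    exact ⟨⟨⟨k, hk⟩, by change f k ∈ A; rw [hka]; exact ha⟩, Subtype.ext hka⟩
  let π : Y →* K ⧸ T.subgroupOf K := (QuotientGroup.mk' _).comp Y.subtype
  have hker : π.ker ≤ g.ker := by
    have hn : (π.ker.map g).Normal := Subgroup.Normal.map inferInstance g hg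
    rcases hn.eq_bot_or_eq_top with h | h
    · rwa [Subgroup.map_eq_bot_iff] at h
    · exfalso
      apply hi2
      intro a ha
      have : (⟨a, ha⟩ : A) ∈ π.ker.map g := h ▸ Subgroup.mem_top _
      obtain ⟨y, hy, hya⟩ := this
      have hy' : (y : K) ∈ T.subgroupOf K := (QuotientGroup.eq_one_iff _).1 hy
      exact ⟨_, hy', congrArg Subtype.val hya⟩
  rcases hq with hq | ⟨⟨e⟩⟩
  · exfalso
    apply hA
    intro a b
    obtain ⟨y, rfl⟩ := hg a
    obtain ⟨z, rfl⟩ := hg b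
    rw [← mul_inv_eq_one, ← map_mul, ← map_mul, ← map_inv, ← map_mul]
    apply hker
    rw [MonoidHom.mem_ker, map_mul, map_inv, map_mul, map_mul, mul_inv_eq_one]
    exact (IsCyclic.isMulCommutative).is_comm.comm _ _
  · have hc60 : Nat.card (K ⧸ T.subgroupOf K) = 60 := by
      rw [Nat.card_congr e.toEquiv, Nat.card_eq_fintype_card]
      decide +kernel
    have i1 : g.ker.index = Nat.card A := by
      rw [Subgroup.index_ker, MonoidHom.range_eq_top.2 hg]
      simp
    have i2 : π.ker.index ∣ 60 := by
      rw [Subgroup.index_ker, ← hc60]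
      exact Subgroup.card_subgroup_dvd_card _
    have i3 : g.ker.index ∣ π.ker.index := Subgroup.index_dvd_of_le hker
    have hA60 := ps_small hA (i1 ▸ i3.trans i2)
    rw [i1, hA60] at i3
    have i4 : π.ker.index = 60 := Nat.dvd_antisymm i2 i3
    have hkk : π.ker = g.ker := by
      apply Subgroup.eq_of_le_of_card_ge hker
      have a1 := π.ker.card_mul_index
      have a2 := g.ker.card_mul_index
      rw [i4] at a1
      rw [i1, hA60] at a2
      omega
    have hπ : Function.Surjective π := by
      rw [← MonoidHom.range_eq_top]
      apply Subgroup.eq_top_of_card_eq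
      rw [← Subgroup.index_ker, i4, hc60]
    exact ⟨(QuotientGroup.quotientKerEquivOfSurjective g hg).symm.trans
      ((QuotientGroup.quotientMulEquivOfEq hkk.symm).trans
        ((QuotientGroup.quotientKerEquivOfSurjective π hπ).trans e))⟩

structure PsMin {H : Type*} [Group H] (N : Subgroup H) : Prop where
  nor : N.Normal
  min : ∀ M : Subgroup H, M.Normal → M ≤ N → M ≠ ⊥ → M = N
  nc : ¬ ∀ a ∈ N, ∀ b ∈ N, a * b = b * a

structure PsComp {H : Type*} [Group H] (N A : Subgroup H) : Prop where
  le : A ≤ N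
  iso : Nonempty (A ≃* alternatingGroup (Fin 5))
  conj : ∀ g : H, (∀ a ∈ A, g * a * g⁻¹ ∈ A) ∨ ∀ a ∈ A, ∀ b ∈ A, a * (g * b * g⁻¹) = g * b * g⁻¹ * a
  clo : Subgroup.normalClosure (A : Set H) = N

lemma ps_conj_inv {H : Type*} [Group H] [Finite H] {A : Subgroup H} {g : H}
    (h : ∀ a ∈ A, g * a * g⁻¹ ∈ A) : ∀ a ∈ A, g⁻¹ * a * g ∈ A := by
  intro a ha
  let β : A → A := fun a => ⟨g * a * g⁻¹, h a a.2⟩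
  have hβ : Function.Injective β := by
    intro a b hab
    have := congrArg Subtype.val hab
    simp only [β, mul_left_inj, mul_right_inj] at this
    exact Subtype.ext this
  obtain ⟨b, hb⟩ := Finite.injective_iff_surjective.1 hβ ⟨a, ha⟩
  have hb' : g * b * g⁻¹ = a := congrArg Subtype.val hb
  have : g⁻¹ * a * g = b := by rw [← hb']; group
  rw [this]
  exact b.2

lemma ps_struct {H : Type*} [Group H] [Finite H]
    (hs : ∀ A : Subgroup H, IsSimpleGroup A → (¬ ∀ a b : A, a * b = b * a) →
      Nonempty (A ≃* alternatingGroup (Fin 5))) {N : Subgroup H} (hN : PsMin N) :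
    ∃ A : Subgroup H, PsComp N A := by
  let P : Set (Subgroup H) := {A | A ≠ ⊥ ∧ A ≤ N ∧
    ∀ g : H, (∀ a ∈ A, g * a * g⁻¹ ∈ A) ∨ ∀ a ∈ A, ∀ b ∈ A, a * (g * b * g⁻¹) = g * b * g⁻¹ * a}
  have hNP : N ∈ P := by
    refine ⟨?_, le_rfl, fun g => Or.inl fun a ha => hN.nor.conj_mem a ha g⟩
    rintro rfl
    apply hN.nc
    intro a ha b hb
    rw [Subgroup.mem_bot] at ha hb
    rw [ha, hb]
  obtain ⟨A, hA⟩ := (Set.toFinite P).exists_minimal ⟨N, hNP⟩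
  obtain ⟨hA0, hAN, hAc⟩ := hA.1
  have hclo : Subgroup.normalClosure (A : Set H) = N := by
    apply hN.min _ inferInstance
    · have := hN.nor
      exact Subgroup.normalClosure_le_normal hAN
    · intro h
      apply hA0
      rw [eq_bot_iff, ← h]
      exact Subgroup.subset_normalClosure
  have hAnt : Nontrivial A := (Subgroup.nontrivial_iff_ne_bot A).2 hA0
  have hsimp : IsSimpleGroup A := by
    refine ⟨fun B' hB' => ?_⟩
    by_cases hb : B' = ⊥
    · exact Or.inl hb
    right
    let T : Set (Subgroup H) := {B | B ≠ ⊥ ∧ B ≤ A ∧ ∀ a ∈ A, ∀ b ∈ B, a * b * a⁻¹ ∈ B}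
    have hT : B'.map A.subtype ∈ T := by
      refine ⟨?_, Subgroup.map_subtype_le B', ?_⟩
      · intro h
        rw [Subgroup.map_eq_bot_iff_of_injective _ A.subtype_injective] at h
        exact hb h
      · rintro a ha b ⟨c, hc, rfl⟩
        exact ⟨⟨a, ha⟩ * c * ⟨a, ha⟩⁻¹, hB'.conj_mem c hc ⟨a, ha⟩, rfl⟩
    obtain ⟨B, hBle, hBm⟩ := (Set.toFinite T).exists_le_minimal hT
    obtain ⟨hB0, hBA, hBn⟩ := hBm.1
    have hBP : B ∈ P := by
      refine ⟨hB0, hBA.trans hAN, fun g => ?_⟩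
      rcases hAc g with hg | hg
      · have hg' := ps_conj_inv hg
        let D : Subgroup H := B ⊓ B.comap (MulAut.conj g⁻¹).toMonoidHom
        have hmem : ∀ x, x ∈ D ↔ x ∈ B ∧ g⁻¹ * x * g ∈ B := by
          intro x
          simp [D, Subgroup.mem_inf]
        by_cases hD : D = ⊥
        · right
          intro a ha b hb
          have h1 : a * (g * b * g⁻¹) * (g * b * g⁻¹ * a)⁻¹ ∈ D := by
            rw [hmem]
            constructor
            · have e : a * (g * b * g⁻¹) * (g * b * g⁻¹ * a)⁻¹ =
                a * ((g * b * g⁻¹) * a⁻¹ * (g * b * g⁻¹)⁻¹) := by group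
              rw [e]
              exact mul_mem ha (hBn _ (hg b (hBA hb)) _ (inv_mem ha))
            · have e : g⁻¹ * (a * (g * b * g⁻¹) * (g * b * g⁻¹ * a)⁻¹) * g =
                ((g⁻¹ * a * g) * b * (g⁻¹ * a * g)⁻¹) * b⁻¹ := by group
              rw [e]
              exact mul_mem (hBn _ (hg' a (hBA ha)) _ hb) (inv_mem hb)
          rw [hD, Subgroup.mem_bot, mul_inv_eq_one] at h1
          exact h1
        · left
          have hDT : D ∈ T := by
            refine ⟨hD, inf_le_left.trans hBA, ?_⟩
            intro a ha b hb
            rw [hmem] at hb ⊢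
            refine ⟨hBn a ha b hb.1, ?_⟩
            have e : g⁻¹ * (a * b * a⁻¹) * g =
              (g⁻¹ * a * g) * (g⁻¹ * b * g) * (g⁻¹ * a * g)⁻¹ := by group
            rw [e]
            exact hBn _ (hg' a ha) _ hb.2
          have hBD : B ≤ D := hBm.2 hDT inf_le_left
          have h2 : ∀ b ∈ B, g⁻¹ * b * g⁻¹⁻¹ ∈ B := by
            intro b hb
            rw [inv_inv]
            exact ((hmem b).1 (hBD hb)).2
          intro b hb
          have := ps_conj_inv h2 b hb
          rwa [inv_inv] at this
      · right
        intro a ha b hb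
        exact hg a (hBA ha) b (hBA hb)
    have h3 : A ≤ B := hA.2 hBP hBA
    rw [eq_top_iff]
    intro a _
    obtain ⟨c, hc, hca⟩ := hBle (h3 a.2)
    have : c = a := Subtype.ext hca
    rwa [← this]
  refine ⟨A, hAN, hs A hsimp ?_, hAc, hclo⟩
  intro hcom
  have hcom' : ∀ a ∈ A, ∀ b ∈ A, a * b = b * a := fun a ha b hb =>
    congrArg Subtype.val (hcom ⟨a, ha⟩ ⟨b, hb⟩)
  apply hN.nc
  rw [← hclo]
  have hgen : ∀ x ∈ Group.conjugatesOfSet (A : Set H), ∀ y ∈ Group.conjugatesOfSet (A : Set H),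
      x * y = y * x := by
    intro x hx y hy
    obtain ⟨a, ha, hax⟩ := Group.mem_conjugatesOfSet_iff.1 hx
    obtain ⟨b, hb, hby⟩ := Group.mem_conjugatesOfSet_iff.1 hy
    obtain ⟨g, rfl⟩ := isConj_iff.1 hax
    obtain ⟨h, rfl⟩ := isConj_iff.1 hby
    have h1 : a * ((g⁻¹ * h) * b * (g⁻¹ * h)⁻¹) = (g⁻¹ * h) * b * (g⁻¹ * h)⁻¹ * a := by
      rcases hAc (g⁻¹ * h) with h2 | h2
      · exact hcom' _ ha _ (h2 b hb)
      · exact h2 a ha b hb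
    have h2 := congrArg (fun z => g * z * g⁻¹) h1
    group at h2 ⊢
    exact h2
  intro a ha b hb
  exact Subgroup.closure_induction₂ (p := fun x y _ _ => x * y = y * x)
    (fun x y hx hy => hgen x hx y hy) (by simp) (by simp)
    (fun x y z _ _ _ h1 h2 => (Commute.mul_left h1 h2)) (fun x y z _ _ _ h1 h2 => (Commute.mul_right h1 h2))
    (fun x y _ _ h => Commute.inv_left h) (fun x y _ _ h => Commute.inv_right h) ha hb

lemma PsComp.pow60 {H : Type*} [Group H] {N A : Subgroup H} (h : PsComp N A) :
    Nat.card A = 60 := by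
  obtain ⟨e⟩ := h.iso
  rw [Nat.card_congr e.toEquiv, Nat.card_eq_fintype_card]
  decide +kernel

lemma ps_closure_comm {H : Type*} [Group H] {A : Subgroup H} {x : H}
    (h : ∀ g : H, ∀ a ∈ A, x * (g * a * g⁻¹) = g * a * g⁻¹ * x) :
    ∀ n ∈ Subgroup.normalClosure (A : Set H), x * n = n * x := by
  have : Subgroup.normalClosure (A : Set H) ≤ Subgroup.centralizer {x} := by
    rw [Subgroup.normalClosure, Subgroup.closure_le]
    intro y hy
    obtain ⟨a, ha, hay⟩ := Group.mem_conjugatesOfSet_iff.1 hy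
    obtain ⟨g, rfl⟩ := isConj_iff.1 hay
    rw [SetLike.mem_coe, Subgroup.mem_centralizer_singleton_iff]
    exact (h g a ha).symm
  intro n hn
  exact (Subgroup.mem_centralizer_singleton_iff.1 (this hn)).symm

lemma ps_primes {H : Type*} [Group H] [Finite H] {N A : Subgroup H} (hN : PsMin N)
    (hA : PsComp N A) {p : ℕ} (hp : p.Prime) (hpN : p ∣ Nat.card N) : p ∣ 60 := by
  by_contra hp60
  obtain ⟨x, hx, hxp⟩ := ps_cauchy N hp hpN
  have hQ : ∀ n ∈ N, ∃ a ∈ A, ∃ c, (∀ b ∈ A, c * b = b * c) ∧ n = a * c := by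
    rw [← hA.clo]
    intro n hn
    refine Subgroup.closure_induction
      (p := fun n _ => ∃ a ∈ A, ∃ c, (∀ b ∈ A, c * b = b * c) ∧ n = a * c) ?_ ?_ ?_ ?_ hn
    · intro y hy
      obtain ⟨a, ha, hay⟩ := Group.mem_conjugatesOfSet_iff.1 hy
      obtain ⟨g, rfl⟩ := isConj_iff.1 hay
      rcases hA.conj g with h | h
      · exact ⟨_, h a ha, 1, by simp, by simp⟩
      · exact ⟨1, one_mem _, _, fun b hb => (h b hb a ha).symm, by simp⟩
    · exact ⟨1, one_mem _, 1, by simp, by simp⟩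
    · rintro _ _ _ _ ⟨a, ha, c, hc, rfl⟩ ⟨a', ha', c', hc', rfl⟩
      refine ⟨a * a', mul_mem ha ha', c * c', ?_, ?_⟩
      · intro b hb
        rw [mul_assoc, hc' b hb, ← mul_assoc, hc b hb, mul_assoc]
      · rw [mul_assoc, ← mul_assoc c, hc a' ha']; group
    · rintro _ _ ⟨a, ha, c, hc, rfl⟩
      refine ⟨a⁻¹, inv_mem ha, c⁻¹, ?_, ?_⟩
      · intro b hb
        exact Commute.inv_left (hc b hb)
      · rw [mul_inv_rev]
        exact Commute.inv_left (Commute.inv_right (hc a ha))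
  have hcen : ∀ y ∈ N, orderOf y = p → ∀ a ∈ A, y * a = a * y := by
    intro y hy hyp
    obtain ⟨a, ha, c, hc, hyac⟩ := hQ y hy
    have h60 : y ^ 60 = c ^ 60 := by
      have h1 : a ^ 60 = 1 := by
        rw [← orderOf_dvd_iff_pow_eq_one, ← hA.pow60]
        exact ps_dvd_card ha
      have hcomm : Commute a c := (hc a ha).symm
      rw [hyac, hcomm.mul_pow, h1, one_mul]
    have hcop : Nat.Coprime p 60 := (hp.coprime_iff_not_dvd).2 hp60
    have hyp1 : y ^ p = 1 := by rw [← hyp, pow_orderOf_eq_one]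
    intro b hb
    have h2 : (b * y * b⁻¹) ^ 60 = y ^ 60 := by
      rw [conj_pow, h60]
      have : Commute (c ^ 60) b := Commute.pow_left (hc b hb) 60
      rw [← this.eq, mul_inv_cancel_right]
    have h3 := ps_pow_inj (by rw [conj_pow, hyp1]; simp) hyp1 hcop.symm h2
    exact (mul_inv_eq_iff_eq_mul.1 h3).symm
  have hxN : ∀ n ∈ N, x * n = n * x := by
    rw [← hA.clo]
    apply ps_closure_comm
    intro g a ha
    have h1 := hcen (g⁻¹ * x * g) (by
      have := hN.nor.conj_mem x hx g⁻¹
      rwa [inv_inv] at this) (by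
      have : g⁻¹ * x * g = MulAut.conj g⁻¹ x := by simp
      rw [this, MulEquiv.orderOf_eq, hxp]) a ha
    have h2 := congrArg (fun z => g * z * g⁻¹) h1
    group at h2 ⊢
    exact h2
  have hnor := hN.nor
  let M : Subgroup H := N ⊓ Subgroup.centralizer (N : Set H)
  have hM : M = N := by
    apply hN.min M inferInstance inf_le_left
    intro h
    have : x ∈ M := ⟨hx, Subgroup.mem_centralizer_iff.2 (fun n hn => (hxN n hn).symm)⟩
    rw [h, Subgroup.mem_bot] at this
    rw [this, orderOf_one] at hxp
    exact hp.one_lt.ne hxp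
  apply hN.nc
  intro a ha b hb
  rw [← hM] at hb
  exact Subgroup.mem_centralizer_iff.1 hb.2 a ha

lemma ps_a5_center (a : alternatingGroup (Fin 5)) (h : ∀ b, a * b = b * a) : a = 1 := by
  revert a
  decide +kernel

lemma ps_a5_card (ℓ : ℕ) (hℓ : ℓ = 2 ∨ ℓ = 3 ∨ ℓ = 5) :
    ∃ n, Nat.card {a : alternatingGroup (Fin 5) // a ^ ℓ = 1 ∧ a ≠ 1} = n ∧ n ∣ 15 * 20 * 24 := by
  rcases hℓ with rfl | rfl | rfl
  · refine ⟨15, ?_, by norm_num⟩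
    rw [Nat.card_eq_fintype_card, Fintype.card_subtype]; decide +kernel
  · refine ⟨20, ?_, by norm_num⟩
    rw [Nat.card_eq_fintype_card, Fintype.card_subtype]; decide +kernel
  · refine ⟨24, ?_, by norm_num⟩
    rw [Nat.card_eq_fintype_card, Fintype.card_subtype]; decide +kernel

lemma ps_fixpt {α : Type*} [Finite α] {p : ℕ} (hp : p.Prime) (h : ¬ p ∣ Nat.card α)
    (σ : Equiv.Perm α) (hσ : σ ^ p = 1) : ∃ a, σ a = a := by
  have : Fact p.Prime := ⟨hp⟩
  classical
  let _ := Fintype.ofFinite α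
  have := Equiv.Perm.card_fixedPoints_modEq (f := (σ : α → α)) (p := p) (n := 1) (by
      rw [pow_one]
      have h := congrArg (fun τ : Equiv.Perm α => (τ : α → α)) hσ
      funext a
      have h2 : ∀ n, (show Function.End α from (σ : α → α)) ^ n = (show Function.End α from ((σ ^ n : Equiv.Perm α) : α → α)) := by
        intro n
        induction n with
        | zero => rfl
        | succ n ih => rw [pow_succ, pow_succ, ih]; rfl
      exact (congrFun (h2 p) a).trans (congrFun h a))
  by_contra hcon
  push Not at hcon
  apply h
  have h0 : Fintype.card (Function.fixedPoints σ) = 0 := by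
    rw [Fintype.card_eq_zero_iff]
    exact ⟨fun a => hcon a.1 a.2⟩
  rw [h0] at this
  rw [Nat.card_eq_fintype_card]
  exact (Nat.modEq_zero_iff_dvd).1 this

lemma ps_comp_center {H : Type*} [Group H] {N A : Subgroup H} (hA : PsComp N A) {a : H}
    (ha : a ∈ A) (h : ∀ b ∈ A, a * b = b * a) : a = 1 := by
  obtain ⟨e⟩ := hA.iso
  have h1 : e ⟨a, ha⟩ = 1 := by
    apply ps_a5_center
    intro b
    obtain ⟨b, rfl⟩ := e.surjective b
    rw [← map_mul, ← map_mul]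
    congr 1
    exact Subtype.ext (h b b.2)
  rw [map_eq_one_iff e e.injective] at h1
  exact congrArg Subtype.val h1

lemma ps_big {H : Type*} [Group H] [Finite H] {N A : Subgroup H} (hA : PsComp N A) {p ℓ : ℕ}
    (hp : p.Prime) (hp60 : ¬ p ∣ 60) (hpH : p ∣ Nat.card H) (hℓ : ℓ = 2 ∨ ℓ = 3 ∨ ℓ = 5) :
    ∃ g : H, orderOf g = p * ℓ := by
  have hpf : Fact p.Prime := ⟨hp⟩
  have hℓp : ℓ.Prime := by rcases hℓ with rfl | rfl | rfl <;> norm_num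
  have hℓ60 : ℓ ∣ 60 := by rcases hℓ with rfl | rfl | rfl <;> norm_num
  have hpℓ : p ≠ ℓ := by rintro rfl; exact hp60 hℓ60
  have hℓf : Fact ℓ.Prime := ⟨hℓp⟩
  obtain ⟨x, hx⟩ := exists_prime_orderOf_dvd_card' (G := H) p hpH
  have hxp : x ^ p = 1 := by rw [← hx, pow_orderOf_eq_one]
  by_cases hnorm : ∀ a ∈ A, x * a * x⁻¹ ∈ A
  · let S := {a : H // a ∈ A ∧ a ^ ℓ = 1 ∧ a ≠ 1}
    have hninv := ps_conj_inv hnorm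
    let σ : Equiv.Perm S :=
      { toFun := fun a => ⟨x * a.1 * x⁻¹, hnorm _ a.2.1, by rw [conj_pow, a.2.2.1]; simp,
          by simpa using a.2.2.2⟩
        invFun := fun a => ⟨x⁻¹ * a.1 * x, hninv _ a.2.1, by
            have := conj_pow (i := ℓ) (a := x⁻¹) (b := a.1)
            rw [inv_inv] at this
            rw [this, a.2.2.1]; simp,
          by
            intro h
            apply a.2.2.2
            have : a.1 = x * (x⁻¹ * a.1 * x) * x⁻¹ := by group
            rw [this, h]; simp⟩
        left_inv := fun a => by apply Subtype.ext; simp only; group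
        right_inv := fun a => by apply Subtype.ext; simp only; group }
    have hσn : ∀ n (a : S), ((σ ^ n) a).1 = x ^ n * a.1 * (x ^ n)⁻¹ := by
      intro n
      induction n with
      | zero => intro a; simp
      | succ n ih =>
        intro a
        rw [pow_succ', Equiv.Perm.mul_apply]
        change x * ((σ ^ n) a).1 * x⁻¹ = _
        rw [ih, pow_succ']
        group
    have hσ : σ ^ p = 1 := by
      ext a
      rw [hσn, hxp]; simp
    have hcard : ¬ p ∣ Nat.card S := by
      obtain ⟨e⟩ := hA.iso
      obtain ⟨n, hn, hn'⟩ := ps_a5_card ℓ hℓ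
      have : Nat.card S = n := by
        rw [← hn]
        refine Nat.card_congr (Equiv.ofBijective
          (fun a : S => (⟨e ⟨a.1, a.2.1⟩, ?_, ?_⟩ : {a : alternatingGroup (Fin 5) // a ^ ℓ = 1 ∧ a ≠ 1})) ⟨?_, ?_⟩)
        · rw [← map_pow, map_eq_one_iff e e.injective]
          exact Subtype.ext a.2.2.1
        · rw [Ne, map_eq_one_iff e e.injective]
          intro h
          exact a.2.2.2 (congrArg Subtype.val h)
        · intro a b h
          have h1 := e.injective (congrArg Subtype.val h)
          exact Subtype.ext (by simpa using h1)
        · rintro ⟨b, hb1, hb2⟩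
          obtain ⟨a, rfl⟩ := e.surjective b
          rw [← map_pow, map_eq_one_iff e e.injective] at hb1
          rw [Ne, map_eq_one_iff e e.injective] at hb2
          exact ⟨⟨a.1, a.2, congrArg Subtype.val hb1, fun h => hb2 (Subtype.ext h)⟩, rfl⟩
      rw [this]
      intro h
      apply hp60
      have h2 : p ∣ 60 * (60 * 2) := h.trans hn'
      rcases hp.dvd_mul.1 h2 with h3 | h3
      · exact h3
      · rcases hp.dvd_mul.1 h3 with h4 | h4
        · exact h4
        · exact h4.trans (by norm_num)
    obtain ⟨a, ha⟩ := ps_fixpt hp hcard σ hσ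
    have h1 : x * a.1 * x⁻¹ = a.1 := congrArg Subtype.val ha
    exact ps_comm_order hp hℓp hpℓ hx (orderOf_eq_prime a.2.2.1 a.2.2.2) (mul_inv_eq_iff_eq_mul.1 h1)
  · obtain ⟨t, ht, hto⟩ := ps_cauchy A hℓp (by rw [hA.pow60]; exact hℓ60)
    have htℓ : t ^ ℓ = 1 := by rw [← hto, pow_orderOf_eq_one]
    have hpow : ∀ i, (∀ a ∈ A, x ^ i * a * (x ^ i)⁻¹ ∈ A) → ∀ k, ∀ a ∈ A, (x ^ i) ^ k * a * ((x ^ i) ^ k)⁻¹ ∈ A := by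
      intro i hi k
      induction k with
      | zero => intro a ha; simpa using ha
      | succ k ih =>
        intro a ha
        have : (x ^ i) ^ (k + 1) * a * ((x ^ i) ^ (k + 1))⁻¹ =
          x ^ i * ((x ^ i) ^ k * a * ((x ^ i) ^ k)⁻¹) * (x ^ i)⁻¹ := by
          rw [pow_succ' (x ^ i) k]; group
        rw [this]
        exact hi _ (ih a ha)
    have hcomm : ∀ i, 0 < i → i < p → ∀ a ∈ A, ∀ b ∈ A, a * (x ^ i * b * (x ^ i)⁻¹) = x ^ i * b * (x ^ i)⁻¹ * a := by
      intro i hi0 hip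
      refine (hA.conj (x ^ i)).resolve_left ?_
      intro h
      apply hnorm
      have hcop : Nat.Coprime i p := (((hp.coprime_iff_not_dvd).2 (Nat.not_dvd_of_pos_of_lt hi0 hip)).symm)
      obtain ⟨k, hk⟩ := Nat.exists_mul_mod_eq_one_of_coprime hcop hp.one_lt
      have hxk : (x ^ i) ^ k = x := by
        rw [← pow_mul]
        conv_rhs => rw [← pow_one x]
        rw [pow_eq_pow_iff_modEq, hx]
        rw [Nat.ModEq, hk.2, Nat.mod_eq_of_lt hp.one_lt]
      have := hpow i h k
      rwa [hxk] at this
    let s : ℕ → H := fun i => x ^ i * t * (x ^ i)⁻¹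
    have hsℓ : ∀ i, s i ^ ℓ = 1 := by
      intro i; simp only [s]; rw [conj_pow, htℓ]; simp
    have hss : ∀ i j, i < j → j < p → Commute (s i) (s j) := by
      intro i j hij hj
      obtain ⟨k, rfl⟩ := Nat.exists_eq_add_of_lt hij
      have h1 := hcomm (k + 1) (by omega) (by omega) t ht t ht
      have h2 : s (i + k + 1) = x ^ i * (x ^ (k + 1) * t * (x ^ (k + 1))⁻¹) * (x ^ i)⁻¹ := by
        simp only [s]
        rw [show i + k + 1 = i + (k + 1) by omega, pow_add x i (k+1)]
        group
      rw [h2]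
      exact (Commute.conj_iff (x ^ i)).2 h1
    let u : ℕ → H := fun n => (t * x) ^ n * (x ^ n)⁻¹
    have hu0 : u 0 = 1 := by simp [u]
    have hus : ∀ n, u (n + 1) = u n * s n := by
      intro n
      simp only [u, s]
      rw [pow_succ (t * x) n, pow_succ' x n]
      group
    have hus' : ∀ n, u (n + 1) = t * (x * u n * x⁻¹) := by
      intro n
      simp only [u]
      rw [pow_succ' (t * x) n, pow_succ x n]
      group
    have huc : ∀ n j, n ≤ j → j < p → Commute (u n) (s j) := by
      intro n
      induction n with
      | zero => intro j _ _; rw [hu0]; exact Commute.one_left _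
      | succ n ih =>
        intro j hnj hj
        rw [hus]
        exact (ih j (by omega) hj).mul_left (hss n j (by omega) hj)
    have huℓ : ∀ n, n ≤ p → u n ^ ℓ = 1 := by
      intro n
      induction n with
      | zero => intro _; rw [hu0, one_pow]
      | succ n ih =>
        intro hn
        rw [hus, (huc n n le_rfl (by omega)).mul_pow, ih (by omega), hsℓ, one_mul]
    have huA : ∀ n, n < p → ∀ a ∈ A, Commute a (x * u n * x⁻¹) := by
      intro n
      induction n with
      | zero => intro _ a _; rw [hu0]; simp
      | succ n ih =>
        intro hn a ha
        have : x * u (n + 1) * x⁻¹ = (x * u n * x⁻¹) * (x ^ (n + 1) * t * (x ^ (n + 1))⁻¹) := by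
          rw [hus, pow_succ' x n]; simp only [s]; group
        rw [this]
        exact (ih (by omega) a ha).mul_right (hcomm (n + 1) (by omega) hn a ha t ht)
    have hup : u p = (t * x) ^ p := by simp only [u]; rw [hxp]; simp
    have hupx : Commute (u p) (t * x) := by rw [hup]; exact Commute.pow_self _ _
    obtain ⟨m, rfl⟩ : ∃ m, p = m + 1 := ⟨p - 1, by have := hp.pos; omega⟩
    have hupt : Commute (u (m + 1)) t := by
      rw [hus']
      exact ((Commute.refl t).mul_left ((huA m (by omega) t ht).symm))
    have hupx' : Commute (u (m + 1)) x := by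
      have : x = t⁻¹ * (t * x) := by group
      rw [this]
      exact (hupt.inv_right).mul_right hupx
    have hne : u (m + 1) ≠ 1 := by
      intro h
      rw [hus'] at h
      have h1 : t⁻¹ = x * u m * x⁻¹ := by
        rw [← one_mul (x * u m * x⁻¹), ← inv_mul_cancel t, mul_assoc, h, mul_one]
      have h2 : t⁻¹ = 1 := by
        apply ps_comp_center hA (inv_mem ht)
        intro b hb
        rw [h1]
        exact (huA m (by omega) b hb).symm
      rw [inv_eq_one] at h2
      rw [h2, orderOf_one] at hto
      exact hℓp.one_lt.ne hto
    exact ps_comm_order hp hℓp hpℓ hx (orderOf_eq_prime (huℓ _ le_rfl) hne) hupx'.symm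

lemma ps_solv_of {G : Type*} [Group G] {A B : Subgroup G} (h : A ≤ B) (hB : Group.IsSolvable B) :
    Group.IsSolvable A :=
  Group.isSolvable_of_isSolvable_injective (Subgroup.inclusion_injective h)

lemma ps_solv_map {G H : Type*} [Group G] [Group H] (f : G →* H) {A : Subgroup G}
    (h : Group.IsSolvable A) : Group.IsSolvable (A.map f) :=
  Group.isSolvable_of_surjective (f := f.subgroupMap A) (f.subgroupMap_surjective A)

lemma ps_solv_comap {G : Type*} [Group G] {L : Subgroup G} [L.Normal] (hL : Group.IsSolvable L)
    {V : Subgroup (G ⧸ L)} (hV : Group.IsSolvable V) :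
    Group.IsSolvable (V.comap (QuotientGroup.mk' L)) := by
  have hle : L ≤ V.comap (QuotientGroup.mk' L) := by
    intro x hx
    rw [Subgroup.mem_comap, QuotientGroup.mk'_apply, (QuotientGroup.eq_one_iff x).2 hx]
    exact one_mem V
  refine Group.isSolvable_of_ker_le_range (Subgroup.inclusion hle)
    (((QuotientGroup.mk' L).comp (V.comap (QuotientGroup.mk' L)).subtype).codRestrict V
      (fun x => x.2)) ?_
  intro x hx
  have h1 : ((x : G) : G ⧸ L) = 1 := congrArg Subtype.val hx
  rw [QuotientGroup.eq_one_iff] at h1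
  exact ⟨⟨x, h1⟩, rfl⟩

lemma ps_a5_nsolv : ¬ Group.IsSolvable (alternatingGroup (Fin 5)) := by
  have := alternatingGroup.isSimpleGroup_five
  rw [← IsSimpleGroup.comm_iff_isSolvable]
  decide +kernel

lemma PsComp.nsolv {H : Type*} [Group H] {N A : Subgroup H} (h : PsComp N A) :
    ¬ Group.IsSolvable A := by
  intro hs
  obtain ⟨e⟩ := h.iso
  exact ps_a5_nsolv (Group.isSolvable_of_surjective (f := e.toMonoidHom) e.surjective)

lemma ps_min_exists {H : Type*} [Group H] [Finite H] (C : Subgroup H) (hC : C.Normal) (h : C ≠ ⊥) :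
    ∃ N : Subgroup H, N ≤ C ∧ N.Normal ∧ N ≠ ⊥ ∧
      ∀ M : Subgroup H, M.Normal → M ≤ N → M ≠ ⊥ → M = N := by
  obtain ⟨N, hNC, hN⟩ := (Set.toFinite {M : Subgroup H | M.Normal ∧ M ≠ ⊥}).exists_le_minimal
    (a := C) ⟨hC, h⟩
  exact ⟨N, hNC, hN.1.1, hN.1.2, fun M h1 h2 h3 => le_antisymm h2 (hN.2 ⟨h1, h3⟩ h2)⟩

lemma ps_solv_comm {G : Type*} [Group G] {N : Subgroup G} (h : ∀ a ∈ N, ∀ b ∈ N, a * b = b * a) :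
    Group.IsSolvable N :=
  Group.isSolvable_of_comm (fun a b => Subtype.ext (h a a.2 b b.2))

lemma ps_master {G : Type*} [Group G] [Finite G] (hG : IsPseudoSolvable G) (C : Subgroup G)
    (hC : C.Normal) (hs : ¬ Group.IsSolvable C) :
    ∃ (L : Subgroup G) (_ : L.Normal), L ≤ C ∧ Group.IsSolvable L ∧
      (∀ D : Subgroup G, D.Normal → D ≤ C → Group.IsSolvable D → D ≤ L) ∧
      ∃ N A : Subgroup (G ⧸ L), N ≤ C.map (QuotientGroup.mk' L) ∧ PsMin N ∧ PsComp N A := by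
  obtain ⟨L, hL⟩ := (Set.toFinite {M : Subgroup G | M.Normal ∧ M ≤ C ∧ Group.IsSolvable M}).exists_maximal
    ⟨⊥, inferInstance, bot_le, inferInstance⟩
  obtain ⟨hLn, hLC, hLs⟩ := hL.1
  have key : ∀ V : Subgroup (G ⧸ L), V.Normal → V ≤ C.map (QuotientGroup.mk' L) →
      Group.IsSolvable V → V = ⊥ := by
    intro V hVn hVC hVs
    have h1 : V.comap (QuotientGroup.mk' L) ≤ L := by
      refine hL.2 ⟨inferInstance, ?_, ps_solv_comap hLs hVs⟩ ?_
      · have := Subgroup.comap_mono (f := QuotientGroup.mk' L) hVC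
        rw [Subgroup.comap_map_eq, QuotientGroup.ker_mk', sup_eq_left.2 hLC] at this
        exact this
      · intro x hx
        rw [Subgroup.mem_comap, QuotientGroup.mk'_apply, (QuotientGroup.eq_one_iff x).2 hx]
        exact one_mem V
    rw [eq_bot_iff]
    intro v hv
    obtain ⟨g, rfl⟩ := QuotientGroup.mk_surjective v
    have h2 := h1 (show g ∈ V.comap (QuotientGroup.mk' L) from hv)
    rw [Subgroup.mem_bot]
    exact (QuotientGroup.eq_one_iff g).2 h2
  have hsurj := QuotientGroup.mk'_surjective L
  refine ⟨L, hLn, hLC, hLs, ?_, ?_⟩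
  · intro D hDn hDC hDs
    have h1 := key (D.map (QuotientGroup.mk' L)) (hDn.map _ hsurj) (Subgroup.map_mono hDC)
      (ps_solv_map _ hDs)
    rwa [Subgroup.map_eq_bot_iff, QuotientGroup.ker_mk'] at h1
  · have hne : C.map (QuotientGroup.mk' L) ≠ ⊥ := by
      intro h
      rw [Subgroup.map_eq_bot_iff, QuotientGroup.ker_mk'] at h
      exact hs (ps_solv_of h hLs)
    obtain ⟨N, hNC, hNn, hN0, hNm⟩ := ps_min_exists _ (hC.map _ hsurj) hne
    have hN : PsMin N := ⟨hNn, hNm, fun h => hN0 (key N hNn hNC (ps_solv_comm h))⟩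
    obtain ⟨A, hA⟩ := ps_struct (fun A hA hc => ps_simple hG _ hsurj A hc) hN
    exact ⟨N, A, hNC, hN, hA⟩

lemma ps_nsolv_dvd {G : Type*} [Group G] [Finite G] (hG : IsPseudoSolvable G) {C : Subgroup G}
    (hC : C.Normal) (hs : ¬ Group.IsSolvable C) {ℓ : ℕ} (hℓ : ℓ = 2 ∨ ℓ = 3 ∨ ℓ = 5) :
    ℓ ∣ Nat.card C := by
  obtain ⟨L, hLn, hLC, hLs, -, N, A, hNC, hN, hA⟩ := ps_master hG C hC hs
  have hℓp : ℓ.Prime := by rcases hℓ with rfl | rfl | rfl <;> norm_num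
  have hℓ60 : ℓ ∣ 60 := by rcases hℓ with rfl | rfl | rfl <;> norm_num
  have h1 : ℓ ∣ Nat.card (C.map (QuotientGroup.mk' L)) := by
    rw [← hA.pow60] at hℓ60
    exact hℓ60.trans (Subgroup.card_dvd_of_le (hA.le.trans hNC))
  have h2 := ps_comap_dvd hℓp h1
  rwa [Subgroup.comap_map_eq, QuotientGroup.ker_mk', sup_eq_left.2 hLC] at h2

lemma ps_v4 : ∃ (V : Subgroup (alternatingGroup (Fin 5))) (x : alternatingGroup (Fin 5)),
    (∀ v ∈ V, v ^ 2 = 1) ∧ (∃ v ∈ V, v ≠ 1) ∧ x ^ 3 = 1 ∧ x ≠ 1 ∧ ∀ v ∈ V, x * v * x⁻¹ ∈ V := by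
  let V : Subgroup (alternatingGroup (Fin 5)) :=
    { carrier := {g | g.1 4 = 4 ∧ g ^ 2 = 1}
      one_mem' := by simp
      mul_mem' := by
        intro a b ha hb
        revert a b
        simp only [Set.mem_setOf_eq]
        decide +kernel
      inv_mem' := by
        intro a ha
        have : a⁻¹ = a := by
          rw [inv_eq_iff_mul_eq_one, ← pow_two]; exact ha.2
        simp only [this]
        exact ha }
  have hV : ∀ g, g ∈ V ↔ g.1 4 = 4 ∧ g ^ 2 = 1 := fun g => Iff.rfl
  have h1 : ∃ v : alternatingGroup (Fin 5), (v.1 4 = 4 ∧ v ^ 2 = 1) ∧ v ≠ 1 := by decide +kernel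
  have h2 : ∃ v : alternatingGroup (Fin 5), (v.1 4 = 4 ∧ v ^ 3 = 1) ∧ v ≠ 1 := by decide +kernel
  obtain ⟨x, hx, hx1⟩ := h2
  refine ⟨V, x, fun v hv => hv.2, h1, hx.2, hx1, ?_⟩
  intro v hv
  rw [hV] at hv ⊢
  constructor
  · have : x.1⁻¹ 4 = 4 := by rw [Equiv.Perm.inv_eq_iff_eq, hx.1]
    change x.1 (v.1 (x.1⁻¹ 4)) = 4
    rw [this, hv.1, hx.1]
  · rw [conj_pow, hv.2]; simp

lemma ps_zlem {G : Type*} [Group G] [Finite G] (hG : IsPseudoSolvable G)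
    (hs : ¬ Group.IsSolvable G) :
    ∃ (T : Subgroup G) (x : G), IsPGroup 2 T ∧ orderOf x = 3 ∧ (∀ b ∈ T, x * b * x⁻¹ ∈ T) ∧
      ∀ D : Subgroup G, D.Normal → T ≤ D → ¬ Group.IsSolvable D := by
  have : Fact (Nat.Prime 2) := ⟨Nat.prime_two⟩
  have hs' : ¬ Group.IsSolvable (⊤ : Subgroup G) := by
    intro h
    exact hs (Group.isSolvable_of_surjective (f := (Subgroup.topEquiv (G := G)).toMonoidHom)
      Subgroup.topEquiv.surjective)
  obtain ⟨L, hLn, -, -, hLm, N, A, -, -, hA⟩ := ps_master hG ⊤ inferInstance hs'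
  obtain ⟨e⟩ := hA.iso
  obtain ⟨V, x, hV2, ⟨v, hv, hv1⟩, hx3, hx1, hxV⟩ := ps_v4
  let φ : alternatingGroup (Fin 5) →* G ⧸ L := A.subtype.comp e.symm.toMonoidHom
  have hφ : Function.Injective φ := A.subtype_injective.comp e.symm.injective
  let J : Subgroup G := (V.map φ).comap (QuotientGroup.mk' L)
  let Y : Subgroup G := Subgroup.normalizer (J : Set G)
  let K : Subgroup Y := J.subgroupOf Y
  have hJY : J ≤ Y := Subgroup.le_normalizer
  have hK : K.Normal := Subgroup.normal_in_normalizer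
  have hLJ : L ≤ J := by
    intro x hx
    rw [Subgroup.mem_comap, QuotientGroup.mk'_apply, (QuotientGroup.eq_one_iff x).2 hx]
    exact one_mem _
  obtain ⟨y, hy⟩ := QuotientGroup.mk_surjective (φ x)
  obtain ⟨j, hj⟩ := QuotientGroup.mk_surjective (φ v)
  have hyJ : ∀ b ∈ J, y * b * y⁻¹ ∈ J := by
    rintro b ⟨w, hw, hwb⟩
    refine ⟨x * w * x⁻¹, hxV w hw, ?_⟩
    rw [map_mul, map_mul, map_inv, hwb, ← hy]
    rfl
  have hyY : y ∈ Y := by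
    rw [Subgroup.mem_normalizer_iff]
    intro h
    refine ⟨hyJ h, fun h' => ?_⟩
    have := ps_conj_inv hyJ _ h'
    have e : y⁻¹ * (y * h * y⁻¹) * y = h := by group
    rwa [e] at this
  have hynJ : y ∉ J := by
    rintro ⟨w, hw, hwy⟩
    rw [QuotientGroup.mk'_apply, hy] at hwy
    have h1 := hφ hwy
    have h2 := hV2 w hw
    rw [h1] at h2
    apply hx1
    rw [pow_succ, h2, one_mul] at hx3
    exact hx3
  have hy3 : y ^ 3 ∈ J := by
    apply hLJ
    rw [← QuotientGroup.eq_one_iff, QuotientGroup.mk_pow, hy, ← map_pow, hx3, map_one]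
  have hidx : 3 ∣ K.index := by
    have : Fact (Nat.Prime 3) := ⟨Nat.prime_three⟩
    have h1 : orderOf ((⟨y, hyY⟩ : Y) : Y ⧸ K) = 3 := by
      apply orderOf_eq_prime
      · rw [← QuotientGroup.mk_pow, QuotientGroup.eq_one_iff]
        exact hy3
      · rw [Ne, QuotientGroup.eq_one_iff]
        exact hynJ
    rw [Subgroup.index, ← h1]
    exact orderOf_dvd_natCard _
  obtain ⟨P⟩ : Nonempty (Sylow 2 K) := inferInstance
  obtain ⟨z, hz3, hzP⟩ := ps_frattini P Nat.prime_three hidx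
  refine ⟨(P.map K.subtype).map Y.subtype, z, ?_, ?_, ?_, ?_⟩
  · exact (P.isPGroup'.map _).map _
  · rw [Subgroup.orderOf_coe, hz3]
  · rintro _ ⟨b, hb, rfl⟩
    exact ⟨z * b * z⁻¹, hzP b hb, rfl⟩
  · intro D hD hTD hDs
    have hTL := hTD.trans (hLm D hD le_top hDs)
    let L' : Subgroup K := L.comap (Y.subtype.comp K.subtype)
    have hL' : L'.Normal := inferInstance
    have hPL : (P : Subgroup K) ≤ L' := by
      intro k hk
      exact hTL ⟨_, ⟨k, hk, rfl⟩, rfl⟩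
    have h1 : ¬ 2 ∣ L'.index := fun h => P.not_dvd_index (h.trans (Subgroup.index_dvd_of_le hPL))
    apply h1
    have hjJ : j ∈ J := ⟨v, hv, hj.symm⟩
    have h1 : orderOf ((⟨⟨j, hJY hjJ⟩, hjJ⟩ : K) : K ⧸ L') = 2 := by
      apply orderOf_eq_prime
      · rw [← QuotientGroup.mk_pow, QuotientGroup.eq_one_iff]
        change j ^ 2 ∈ L
        rw [← QuotientGroup.eq_one_iff, QuotientGroup.mk_pow, hj, ← map_pow, hV2 v hv, map_one]
      · rw [Ne, QuotientGroup.eq_one_iff]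
        change ¬ j ∈ L
        rw [← QuotientGroup.eq_one_iff, hj, map_eq_one_iff φ hφ]
        exact hv1
    rw [Subgroup.index, ← h1]
    exact orderOf_dvd_natCard _

def PsNS (G : Type*) [Group G] (t : ℕ) : Prop :=
  ∀ K : Subgroup G, K.Normal → Group.IsSolvable K → ¬ t ∣ Nat.card K

def PsS (t : ℕ) : Prop := t = 2 ∨ t = 3 ∨ t = 5

def PsTied (G : Type*) [Group G] (p q : ℕ) : Prop :=
  PsS p ∧ PsS q ∧ PsNS G p ∧ PsNS G q ∧ ¬ Group.IsSolvable G

lemma PsS.prime {t : ℕ} (h : PsS t) : t.Prime := by rcases h with rfl | rfl | rfl <;> norm_num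

lemma ps_solv_prime {G : Type*} [Group G] [Finite G] (hG : IsPseudoSolvable G) {C : Subgroup G}
    (hC : C.Normal) {ℓ : ℕ} (hℓ : PsS ℓ) (h : ¬ ℓ ∣ Nat.card C) : Group.IsSolvable C := by
  by_contra hs
  exact h (ps_nsolv_dvd hG hC hs hℓ)

lemma ps_top_nsolv {G : Type*} [Group G] (hs : ¬ Group.IsSolvable G) :
    ¬ Group.IsSolvable (⊤ : Subgroup G) := by
  intro h
  exact hs (Group.isSolvable_of_surjective (f := (Subgroup.topEquiv (G := G)).toMonoidHom)
    Subgroup.topEquiv.surjective)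

lemma ps_dvd_group {G : Type*} [Group G] [Finite G] (hG : IsPseudoSolvable G)
    (hs : ¬ Group.IsSolvable G) {ℓ : ℕ} (hℓ : PsS ℓ) : ℓ ∣ Nat.card G := by
  have := ps_nsolv_dvd hG (C := ⊤) inferInstance (ps_top_nsolv hs) hℓ
  rwa [Subgroup.card_top] at this

lemma ps_cent {G : Type*} [Group G] [Finite G] {L : Subgroup G} [L.Normal] {V : Subgroup (G ⧸ L)}
    {p r : ℕ} (hV : PsElem V p) (hp : p.Prime) (hr : r.Prime) (hpr : p ≠ r)
    (hL : ¬ r ∣ Nat.card L)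
    (h : r ∣ Nat.card ((Subgroup.centralizer (V : Set (G ⧸ L))).comap (QuotientGroup.mk' L))) :
    ∃ g : G, orderOf g = p * r := by
  obtain ⟨x, hx, hxr⟩ := ps_cauchy _ hr h
  obtain ⟨v, hv, hv1⟩ := (Subgroup.bot_or_exists_ne_one V).resolve_left hV.ne
  exact ps_fix hV hp hr hpr hL hxr hv hv1 (Subgroup.mem_centralizer_iff.1 hx v hv).symm

lemma ps_l9 {G : Type*} [Group G] [Finite G] (hG : IsPseudoSolvable G) {p : ℕ} (hp : p.Prime)
    (hp2 : p ≠ 2) (h : PsArr G p 2) (e : ¬ ∃ g : G, orderOf g = p * 2)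
    (hs : ¬ Group.IsSolvable G) (hns : PsNS G 2) : False := by
  obtain ⟨L, hLn, V, hV, hpL, h2L⟩ := h
  have := hV.nor
  let D : Subgroup G := (Subgroup.centralizer (V : Set (G ⧸ L))).comap (QuotientGroup.mk' L)
  have hDn : D.Normal := inferInstance
  have h2D : ¬ 2 ∣ Nat.card D := fun h => e (ps_cent hV hp Nat.prime_two hp2 h2L h)
  have hDs : Group.IsSolvable D := ps_solv_prime hG hDn (Or.inl rfl) h2D
  have hinv : ∀ t : G, orderOf t = 2 → ∀ v ∈ V, (t : G ⧸ L) * v * (t : G ⧸ L)⁻¹ = v⁻¹ := by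
    intro t ht v hv
    have htt : (t : G ⧸ L) * t = 1 := by
      have : t ^ 2 = 1 := by rw [← ht, pow_orderOf_eq_one]
      rw [← QuotientGroup.mk_mul, ← pow_two, this]; rfl
    have hti : (t : G ⧸ L)⁻¹ = t := inv_eq_of_mul_eq_one_left htt
    have hc := hV.nor.conj_mem v hv t
    have h1 : v * ((t : G ⧸ L) * v * (t : G ⧸ L)⁻¹) = 1 := by
      by_contra hne
      apply e
      refine ps_fix hV hp Nat.prime_two hp2 h2L ht (mul_mem hv hc) hne ?_
      have h3 := hV.com v hv _ hc
      rw [hti] at h3 ⊢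
      generalize (t : G ⧸ L) = t at *
      calc t * (v * (t * v * t)) = t * (t * v * t * v) := by rw [h3]
        _ = (t * t) * (v * t * v) := by group
        _ = v * (t * v * t) * t := by rw [htt, one_mul]; simp only [mul_assoc, htt, mul_one]
    exact eq_inv_of_mul_eq_one_right h1
  obtain ⟨t, -, ht⟩ := ps_cauchy (⊤ : Subgroup G) Nat.prime_two
    (by rw [Subgroup.card_top]; exact ps_dvd_group hG hs (Or.inl rfl))
  have hcen : ∀ g : G, (g : G ⧸ D) * t * (g : G ⧸ D)⁻¹ = t := by
    intro g
    have hgt : orderOf (g * t * g⁻¹) = 2 := by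
      have : g * t * g⁻¹ = MulAut.conj g t := by simp
      rw [this, MulEquiv.orderOf_eq, ht]
    rw [← mul_inv_eq_one]
    have : (g * t * g⁻¹) * t⁻¹ ∈ D := by
      rw [Subgroup.mem_comap, Subgroup.mem_centralizer_iff]
      intro v hv
      have h1 := hinv t ht v⁻¹ (inv_mem hv)
      have h2 := hinv _ hgt v hv
      have h3 := hinv t ht v hv
      rw [inv_inv] at h1
      change v * ((((g * t * g⁻¹ : G) : G ⧸ L)) * (t : G ⧸ L)⁻¹) = (((g * t * g⁻¹ : G) : G ⧸ L)) * (t : G ⧸ L)⁻¹ * v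
      generalize ((g * t * g⁻¹ : G) : G ⧸ L) = s at *
      generalize (t : G ⧸ L) = t at *
      have h4 : s * v⁻¹ * s⁻¹ = v := by
        have := congrArg (·⁻¹) h2
        simpa [mul_assoc] using this
      have h5 : s * v⁻¹ = v * s := mul_inv_eq_iff_eq_mul.1 h4
      have h6 : t⁻¹ * v = v⁻¹ * t⁻¹ := by
        rw [inv_mul_eq_iff_eq_mul, ← mul_assoc, h1]
      rw [mul_assoc s, h6, ← mul_assoc s, h5, mul_assoc]
    exact (QuotientGroup.eq_one_iff _).2 this
  have hZn : (Subgroup.zpowers (t : G ⧸ D)).Normal := by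
    constructor
    rintro _ ⟨k, rfl⟩ g
    obtain ⟨g, rfl⟩ := QuotientGroup.mk_surjective g
    refine ⟨k, ?_⟩
    simp only
    rw [← conj_zpow, hcen]
  refine hns ((Subgroup.zpowers (t : G ⧸ D)).comap (QuotientGroup.mk' D)) inferInstance
    (ps_solv_comap hDs (ps_solv_comm ?_)) ?_
  · rintro _ ⟨k, rfl⟩ _ ⟨l, rfl⟩
    exact (Commute.refl _).zpow_zpow k l
  · rw [← ht]
    apply ps_dvd_card
    exact Subgroup.mem_zpowers _

lemma ps_l10 {G : Type*} [Group G] [Finite G] (hG : IsPseudoSolvable G) {t s : ℕ} (ht : PsS t)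
    (hns : PsNS G t) (h : PsArr G t s) : False := by
  obtain ⟨L, hLn, V, hV, hpL, -⟩ := h
  have := hV.nor
  exact hns (V.comap (QuotientGroup.mk' L)) inferInstance
    (ps_solv_comap (ps_solv_prime hG hLn ht hpL) (ps_solv_comm hV.com))
    (ps_comap_dvd ht.prime (hV.dvd ht.prime))

lemma ps_l7 {G : Type*} [Group G] [Finite G] (hG : IsPseudoSolvable G) {p q r : ℕ} (hp : p.Prime) (hq : q.Prime)
    (hr : r.Prime) (hpq : p ≠ q) (hqr : q ≠ r) (hrG : r ∣ Nat.card G) (h1 : PsArr G p q)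
    (h2 : PsArr G q r) (e1 : ¬ ∃ g : G, orderOf g = p * q) (e2 : ¬ ∃ g : G, orderOf g = q * r)
    (hs : ¬ Group.IsSolvable G) : ¬ PsS r := by
  intro hr'
  obtain ⟨⟨C, hC, hcom, hrC⟩, -⟩ := ps_chain hp hq hr hpq hqr hrG h1 h2 e1 e2
  have h1 := ps_solv_prime hG hC hr' hrC
  apply hs
  rw [Group.isSolvable_iff_subgroup_quotient C]
  refine ⟨h1, Group.isSolvable_of_comm ?_⟩
  intro a b
  obtain ⟨a, rfl⟩ := QuotientGroup.mk_surjective a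
  obtain ⟨b, rfl⟩ := QuotientGroup.mk_surjective b
  rw [← mul_inv_eq_one]
  exact (QuotientGroup.eq_one_iff _).2 (hcom a b)

lemma ps_l12 {G : Type*} [Group G] [Finite G] (hG : IsPseudoSolvable G) {p : ℕ} (hp : p.Prime)
    (hp2 : p ≠ 2) (hp3 : p ≠ 3) (h : PsArr G p 3) (e : ¬ ∃ g : G, orderOf g = p * 3)
    (e6 : ¬ ∃ g : G, orderOf g = 6) (hs : ¬ Group.IsSolvable G) : False := by
  obtain ⟨L, hLn, V, hV, hpL, h3L⟩ := h
  have := hV.nor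
  have : Fact (Nat.Prime 2) := ⟨Nat.prime_two⟩
  obtain ⟨T, x, hT, hx, hxT, hTD⟩ := ps_zlem hG hs
  by_cases hact : ∀ b ∈ T, ∀ v ∈ V, (b : G ⧸ L) * v = v * b
  · have h1 := hTD ((Subgroup.centralizer (V : Set (G ⧸ L))).comap (QuotientGroup.mk' L))
      inferInstance (by
        intro b hb
        rw [Subgroup.mem_comap, Subgroup.mem_centralizer_iff]
        exact fun v hv => (hact b hb v hv).symm)
    exact e (ps_cent hV hp Nat.prime_three hp3 h3L
      (ps_nsolv_dvd hG inferInstance h1 (Or.inr (Or.inl rfl))))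
  · push Not at hact
    obtain ⟨b, hb, v, hv, hne⟩ := hact
    refine e (ps_frob hV hp Nat.prime_three hp3 h3L T ?_ x hx hxT ?_ b hb v hv hne)
    · intro hd
      obtain ⟨n, hn⟩ := hT.exists_card_eq
      rw [hn] at hd
      exact hp2 ((Nat.prime_dvd_prime_iff_eq hp Nat.prime_two).1 (hp.dvd_of_dvd_pow hd))
    · intro c hc hcx
      by_contra hc1
      obtain ⟨n, hn⟩ := (IsPGroup.iff_orderOf.1 hT) ⟨c, hc⟩
      rw [Subgroup.orderOf_mk] at hn
      have hn0 : n ≠ 0 := by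
        rintro rfl
        rw [pow_zero, orderOf_eq_one_iff] at hn
        exact hc1 hn
      obtain ⟨m, rfl⟩ := Nat.exists_eq_succ_of_ne_zero hn0
      have ho : orderOf (c ^ 2 ^ m) = 2 := by
        rw [orderOf_pow_of_dvd (by positivity) (by rw [hn]; exact pow_dvd_pow 2 (Nat.le_succ m)), hn,
          Nat.succ_eq_add_one, pow_succ, Nat.mul_div_cancel_left _ (by positivity)]
      exact e6 (ps_comm_order Nat.prime_two Nat.prime_three (by norm_num) ho hx
        ((show Commute c x from hcx).pow_left _))

lemma ps_s60 {p : ℕ} (hp : p.Prime) (h : p ∣ 60) : PsS p := by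
  have h1 : p ∈ Nat.primeFactors 60 := by simp [hp, h]
  have h2 : Nat.primeFactors 60 = {2, 3, 5} := by decide +kernel
  rw [h2] at h1
  simpa [PsS] using h1

lemma PsS.dvd {p : ℕ} (h : PsS p) : p ∣ 60 := by
  rcases h with rfl | rfl | rfl <;> norm_num

lemma ps_elem_of {H : Type*} [Group H] [Finite H] {N : Subgroup H} (hn : N.Normal) (h0 : N ≠ ⊥)
    (hm : ∀ M : Subgroup H, M.Normal → M ≤ N → M ≠ ⊥ → M = N)
    (hc : ∀ a ∈ N, ∀ b ∈ N, a * b = b * a) {p : ℕ} (hp : p.Prime) (hpN : p ∣ Nat.card N) :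
    PsElem N p := by
  let M : Subgroup H :=
    { carrier := {v | v ∈ N ∧ v ^ p = 1}
      one_mem' := ⟨one_mem _, one_pow _⟩
      mul_mem' := by
        intro a b ha hb
        refine ⟨mul_mem ha.1 hb.1, ?_⟩
        rw [Commute.mul_pow (hc a ha.1 b hb.1), ha.2, hb.2, one_mul]
      inv_mem' := by
        intro a ha
        exact ⟨inv_mem ha.1, by rw [inv_pow, ha.2, inv_one]⟩ }
  have hM : ∀ v, v ∈ M ↔ v ∈ N ∧ v ^ p = 1 := fun v => Iff.rfl
  have hMN : M = N := by
    apply hm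
    · constructor
      intro a ha g
      exact ⟨hn.conj_mem a ha.1 g, by rw [conj_pow, ha.2]; simp⟩
    · exact fun v hv => hv.1
    · intro h
      obtain ⟨x, hx, hxp⟩ := ps_cauchy N hp hpN
      have : x ∈ M := ⟨hx, by rw [← hxp, pow_orderOf_eq_one]⟩
      rw [h, Subgroup.mem_bot] at this
      rw [this, orderOf_one] at hxp
      exact hp.one_lt.ne hxp
  refine ⟨hn, h0, hc, fun a ha => ?_⟩
  rw [← hMN] at ha
  exact ha.2

lemma ps_ns {G : Type*} [Group G] [Finite G] {L : Subgroup G} [L.Normal]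
    {N A : Subgroup (G ⧸ L)} (hN : PsMin N) (hA : PsComp N A) {p q : ℕ} (hp : p.Prime)
    (hq : PsS q) (hpq : p ≠ q) (hpL : ¬ p ∣ Nat.card L) (e : ¬ ∃ g : G, orderOf g = p * q) :
    PsNS G p := by
  intro K hK hKs hpK
  have hsurj := QuotientGroup.mk'_surjective L
  obtain ⟨x, hx, hxp⟩ := ps_cauchy K hp hpK
  obtain ⟨n, hn, hnq⟩ := ps_cauchy A hq.prime (by rw [hA.pow60]; exact hq.dvd)
  have hx' := ps_order_mk L hp hpL hxp
  have hxK : (x : G ⧸ L) ∈ K.map (QuotientGroup.mk' L) := ⟨x, hx, rfl⟩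
  have hKn : (K.map (QuotientGroup.mk' L)).Normal := hK.map _ hsurj
  have hNn := hN.nor
  have h1 : K.map (QuotientGroup.mk' L) ⊓ N = ⊥ := by
    by_contra hne
    have h2 := hN.min _ inferInstance inf_le_right hne
    have h3 : A ≤ K.map (QuotientGroup.mk' L) := hA.le.trans (h2 ▸ inf_le_left)
    exact hA.nsolv (ps_solv_of h3 (ps_solv_map _ hKs))
  have h2 : (x : G ⧸ L) * n = n * x := by
    rw [← mul_inv_eq_one, ← Subgroup.mem_bot, ← h1]
    constructor
    · have e1 : (x : G ⧸ L) * n * (n * (x : G ⧸ L))⁻¹ = (x : G ⧸ L) * (n * (x : G ⧸ L)⁻¹ * n⁻¹) := by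
        group
      rw [e1]
      exact mul_mem hxK (hKn.conj_mem _ (inv_mem hxK) n)
    · have e1 : (x : G ⧸ L) * n * (n * (x : G ⧸ L))⁻¹ = ((x : G ⧸ L) * n * (x : G ⧸ L)⁻¹) * n⁻¹ := by
        group
      rw [e1]
      exact N.mul_mem (hNn.conj_mem _ (hA.le hn) _) (N.inv_mem (hA.le hn))
  exact e (ps_lift_order _ hsurj (ps_comm_order hp hq.prime hpq hx' hnq h2))

lemma ps_card_quot {G : Type*} [Group G] [Finite G] {L : Subgroup G} [L.Normal] {p : ℕ}
    (hp : p.Prime) (hpG : p ∣ Nat.card G) (hpL : ¬ p ∣ Nat.card L) : p ∣ Nat.card (G ⧸ L) := by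
  rw [L.card_eq_card_quotient_mul_card_subgroup] at hpG
  exact (hp.dvd_mul.1 hpG).resolve_right hpL

lemma ps_l11 {G : Type*} [Group G] [Finite G] (hG : IsPseudoSolvable G) {p q : ℕ} (hp : p.Prime)
    (hq : q.Prime) (hpq : p ≠ q) (hpG : p ∣ Nat.card G) (hqG : q ∣ Nat.card G)
    (e : ¬ ∃ g : G, orderOf g = p * q) : PsArr G p q ∨ PsArr G q p ∨ PsTied G p q := by
  have e' : ¬ ∃ g : G, orderOf g = q * p := by rwa [mul_comm]
  obtain ⟨L, hL⟩ := (Set.toFinite {M : Subgroup G | M.Normal ∧ ¬ p ∣ Nat.card M ∧ ¬ q ∣ Nat.card M}).exists_maximal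
    ⟨⊥, inferInstance, by simpa using hp.one_lt.ne', by simpa using hq.one_lt.ne'⟩
  obtain ⟨hLn, hpL, hqL⟩ := hL.1
  have hsurj := QuotientGroup.mk'_surjective L
  have hp' := ps_card_quot hp hpG hpL
  have hq' := ps_card_quot hq hqG hqL
  have htop : (⊤ : Subgroup (G ⧸ L)) ≠ ⊥ := by
    intro h
    rw [← Subgroup.card_top (G := G ⧸ L), h, Subgroup.card_bot] at hp'
    exact hp.one_lt.ne' (Nat.dvd_one.1 hp')
  obtain ⟨N, -, hNn, hN0, hNm⟩ := ps_min_exists _ inferInstance htop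
  have hdvd : p ∣ Nat.card N ∨ q ∣ Nat.card N := by
    by_contra hcon
    push Not at hcon
    have h1 : N.comap (QuotientGroup.mk' L) ≤ L := by
      refine hL.2 ⟨inferInstance, ps_comap_card hp hpL hcon.1, ps_comap_card hq hqL hcon.2⟩ ?_
      intro x hx
      rw [Subgroup.mem_comap, QuotientGroup.mk'_apply, (QuotientGroup.eq_one_iff x).2 hx]
      exact one_mem N
    apply hN0
    rw [eq_bot_iff]
    intro v hv
    obtain ⟨g, rfl⟩ := QuotientGroup.mk_surjective v
    exact (QuotientGroup.eq_one_iff g).2 (h1 (show g ∈ N.comap (QuotientGroup.mk' L) from hv))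
  by_cases hc : ∀ a ∈ N, ∀ b ∈ N, a * b = b * a
  · rcases hdvd with h | h
    · exact Or.inl ⟨L, hLn, N, ps_elem_of hNn hN0 hNm hc hp h, hpL, hqL⟩
    · exact Or.inr (Or.inl ⟨L, hLn, N, ps_elem_of hNn hN0 hNm hc hq h, hqL, hpL⟩)
  · right; right
    have hN : PsMin N := ⟨hNn, hNm, hc⟩
    obtain ⟨A, hA⟩ := ps_struct (fun A hA hc => ps_simple hG _ hsurj A hc) hN
    have h60 : p ∣ 60 ∧ q ∣ 60 := by
      have hor : p ∣ 60 ∨ q ∣ 60 := hdvd.imp (ps_primes hN hA hp) (ps_primes hN hA hq)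
      by_contra hcon
      rcases hor with h | h
      · have hq60 : ¬ q ∣ 60 := fun h2 => hcon ⟨h, h2⟩
        exact e' (ps_lift_order _ hsurj (ps_big hA hq hq60 hq' (ps_s60 hp h)))
      · have hp60 : ¬ p ∣ 60 := fun h2 => hcon ⟨h2, h⟩
        exact e (ps_lift_order _ hsurj (ps_big hA hp hp60 hp' (ps_s60 hq h)))
    have hpS := ps_s60 hp h60.1
    have hqS := ps_s60 hq h60.2
    refine ⟨hpS, hqS, ps_ns hN hA hp hqS hpq hpL e, ps_ns hN hA hq hpS hpq.symm hqL e', ?_⟩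
    intro hs
    exact hA.nsolv inferInstance

def PsE (G : Type*) [Group G] (u v : ℕ) : Prop :=
  u.Prime ∧ v.Prime ∧ u ≠ v ∧ u ∣ Nat.card G ∧ v ∣ Nat.card G ∧ (¬ ∃ g : G, orderOf g = u * v) ∧
    (PsArr G u v ∨ (PsTied G u v ∧ u < v))

lemma ps_orient {G : Type*} [Group G] [Finite G] (hG : IsPseudoSolvable G) {p q : ℕ} (hp : p.Prime)
    (hq : q.Prime) (hpq : p ≠ q) (hpG : p ∣ Nat.card G) (hqG : q ∣ Nat.card G)
    (e : ¬ ∃ g : G, orderOf g = p * q) : PsE G p q ∨ PsE G q p := by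
  have e' : ¬ ∃ g : G, orderOf g = q * p := by rwa [mul_comm]
  rcases ps_l11 hG hp hq hpq hpG hqG e with h | h | h
  · exact Or.inl ⟨hp, hq, hpq, hpG, hqG, e, Or.inl h⟩
  · exact Or.inr ⟨hq, hp, hpq.symm, hqG, hpG, e', Or.inl h⟩
  · rcases lt_or_gt_of_ne hpq with hl | hl
    · exact Or.inl ⟨hp, hq, hpq, hpG, hqG, e, Or.inr ⟨h, hl⟩⟩
    · exact Or.inr ⟨hq, hp, hpq.symm, hqG, hpG, e', Or.inr
        ⟨⟨h.2.1, h.1, h.2.2.2.1, h.2.2.1, h.2.2.2.2⟩, hl⟩⟩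

lemma ps_walk {G : Type*} [Group G] [Finite G] (hG : IsPseudoSolvable G) {a b c d : ℕ}
    (h1 : PsE G a b) (h2 : PsE G b c) (h3 : PsE G c d) : False := by
  obtain ⟨ha, hb, hab, haG, hbG, e1, k1⟩ := h1
  obtain ⟨-, hc, hbc, -, hcG, e2, k2⟩ := h2
  obtain ⟨-, hd, hcd, -, hdG, e3, k3⟩ := h3
  rcases k1 with k1 | k1
  · rcases k2 with k2 | k2
    · rcases k3 with k3 | k3
      · exact ps_chain4 ha hb hc hd hab hbc hcd hcG hdG k1 k2 k3 e1 e2 e3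
      · exact ps_l7 hG ha hb hc hab hbc hcG k1 k2 e1 e2 k3.1.2.2.2.2 k3.1.1
    · rcases k3 with k3 | k3
      · exact ps_l10 hG k2.1.2.1 k2.1.2.2.2.1 k3
      · have hb2 : b = 2 := by
          have := k2.2
          have := k3.2
          rcases k2.1.1 with h | h | h <;> rcases k2.1.2.1 with h' | h' | h' <;>
            rcases k3.1.2.1 with h'' | h'' | h'' <;> omega
        subst hb2
        exact ps_l9 hG ha hab k1 e1 k2.1.2.2.2.2 k2.1.2.2.1
  · rcases k2 with k2 | k2
    · exact ps_l10 hG k1.1.2.1 k1.1.2.2.2.1 k2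
    · rcases k3 with k3 | k3
      · exact ps_l10 hG k2.1.2.1 k2.1.2.2.2.1 k3
      · have := k1.2
        have := k2.2
        have := k3.2
        rcases k1.1.1 with h | h | h <;> rcases k1.1.2.1 with h' | h' | h' <;>
            rcases k3.1.1 with h'' | h'' | h'' <;> rcases k3.1.2.1 with h3 | h3 | h3 <;> omega

lemma ps_trans {G : Type*} [Group G] [Finite G] (hG : IsPseudoSolvable G) {u v w : ℕ}
    (h1 : PsE G u v) (h2 : PsE G v w) (h3 : PsE G u w) :
    v = 3 ∧ w = 5 ∧ ¬ Group.IsSolvable G ∧ (u = 2 ∨ PsArr G u 3) := by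
  obtain ⟨hu, hv, huv, huG, hvG, e1, k1⟩ := h1
  obtain ⟨-, hw, hvw, -, hwG, e2, k2⟩ := h2
  obtain ⟨-, -, huw, -, -, e3, k3⟩ := h3
  rcases k1 with k1 | k1
  · rcases k2 with k2 | k2
    · exact absurd ((ps_chain hu hv hw huv hvw hwG k1 k2 e1 e2).2 huw) e3
    · have hv2 : v ≠ 2 := by
        rintro rfl
        exact ps_l9 hG hu huv k1 e1 k2.1.2.2.2.2 k2.1.2.2.1
      have : v = 3 ∧ w = 5 := by
        have := k2.2
        rcases k2.1.1 with h | h | h <;> rcases k2.1.2.1 with h' | h' | h' <;> omega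
      obtain ⟨rfl, rfl⟩ := this
      exact ⟨rfl, rfl, k2.1.2.2.2.2, Or.inr k1⟩
  · rcases k2 with k2 | k2
    · exact (ps_l10 hG k1.1.2.1 k1.1.2.2.2.1 k2).elim
    · have : u = 2 ∧ v = 3 ∧ w = 5 := by
        have := k1.2
        have := k2.2
        rcases k1.1.1 with h | h | h <;> rcases k2.1.1 with h' | h' | h' <;>
          rcases k2.1.2.1 with h'' | h'' | h'' <;> omega
      exact ⟨this.2.1, this.2.2, k1.1.2.2.2.2, Or.inl this.1⟩

lemma ps_tri {G : Type*} [Group G] [Finite G] (hG : IsPseudoSolvable G) {p q r : ℕ}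
    (h1 : PsE G p q ∨ PsE G q p) (h2 : PsE G p r ∨ PsE G r p) (h3 : PsE G q r ∨ PsE G r q) :
    ∃ u, (p = u ∨ p = 3 ∨ p = 5) ∧ PsE G u 3 ∧ PsE G u 5 ∧ PsE G 3 5 ∧
      ¬ Group.IsSolvable G ∧ (u = 2 ∨ PsArr G u 3) := by
  have key : ∀ u v w, PsE G u v → PsE G v w → PsE G u w → (p = u ∨ p = v ∨ p = w) →
      ∃ u, (p = u ∨ p = 3 ∨ p = 5) ∧ PsE G u 3 ∧ PsE G u 5 ∧ PsE G 3 5 ∧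
      ¬ Group.IsSolvable G ∧ (u = 2 ∨ PsArr G u 3) := by
    intro u v w k1 k2 k3 hp
    obtain ⟨rfl, rfl, hs, h⟩ := ps_trans hG k1 k2 k3
    exact ⟨u, hp, k1, k3, k2, hs, h⟩
  rcases h1 with h1 | h1 <;> rcases h2 with h2 | h2 <;> rcases h3 with h3 | h3
  · exact key p q r h1 h3 h2 (by simp)
  · exact key p r q h2 h3 h1 (by simp)
  · exact (ps_walk hG h1 h3 h2).elim
  · exact key r p q h2 h1 h3 (by simp)
  · exact key q p r h1 h2 h3 (by simp)
  · exact (ps_walk hG h2 h3 h1).elim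
  · exact key q r p h3 h2 h1 (by simp)
  · exact key r q p h3 h1 h2 (by simp)

lemma ps_color {G : Type*} [Group G] [Finite G] (hG : IsPseudoSolvable G) :
    ∃ c : ℕ → Fin 3, ∀ p q : ℕ, PsE G p q → c p ≠ c q := by
  classical
  refine ⟨fun v => if ¬ ∃ u, PsE G u v then 0 else if ∃ u t, PsE G t u ∧ PsE G u v then 2 else 1, ?_⟩
  intro p q h
  have hq : ∃ u, PsE G u q := ⟨p, h⟩
  simp only [hq, not_true, if_false]
  by_cases hp : ∃ u, PsE G u p
  · obtain ⟨t, ht⟩ := hp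
    have hp : ∃ u, PsE G u p := ⟨t, ht⟩
    have h2 : ∃ u t, PsE G t u ∧ PsE G u q := ⟨p, t, ht, h⟩
    have h3 : ¬ ∃ u t, PsE G t u ∧ PsE G u p := by
      rintro ⟨u, t, a, b⟩
      exact ps_walk hG a b h
    rw [if_neg (not_not.2 hp), if_neg h3, if_pos h2]
    decide
  · rw [if_pos hp]
    split_ifs <;> decide

/-- The complement of the prime graph of a pseudo-solvable group is 3-colorable,
and exactly one of three mutually exclusive situations occurs: the complement is
triangle-free, or `{2,3,5}` is a triangle, or `{p,3,5}` is a triangle for some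
prime `p ∉ {2,3,5}`. -/
theorem pseudo_solvable_trichotomy
    (G : Type*) [Group G] [Finite G] (hG : IsPseudoSolvable G) :
    (∃ c : ℕ → Fin 3, ∀ p q : ℕ, p.Prime → q.Prime → p ≠ q →
      p ∣ Nat.card G → q ∣ Nat.card G →
      (¬ ∃ g : G, orderOf g = p * q) → c p ≠ c q) ∧
    ((ComplementTriangleFree G ∧ ¬ Triangle235 G ∧ ¬ TriangleP35 G) ∨
     (¬ ComplementTriangleFree G ∧ Triangle235 G ∧ ¬ TriangleP35 G) ∨
     (¬ ComplementTriangleFree G ∧ ¬ Triangle235 G ∧ TriangleP35 G)) := by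
  refine ⟨?_, ?_⟩
  · obtain ⟨c, hc⟩ := ps_color hG
    refine ⟨c, fun p q hp hq hpq hpG hqG e => ?_⟩
    rcases ps_orient hG hp hq hpq hpG hqG e with h | h
    · exact hc p q h
    · exact (hc q p h).symm
  · have hA : Triangle235 G → ¬ ComplementTriangleFree G := by
      rintro ⟨h2, h3, h5, e6, e10, e15⟩ h
      exact h ⟨2, 3, 5, by norm_num, by norm_num, by norm_num, by norm_num, by norm_num,
        by norm_num, h2, h3, h5, e6, e10, e15⟩
    have hB : TriangleP35 G → ¬ ComplementTriangleFree G := by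
      rintro ⟨p, hp, hp', hpG, h3, h5, e1, e2, e15⟩ h
      simp only [Set.mem_insert_iff, Set.mem_singleton_iff, not_or] at hp'
      refine h ⟨3, 5, p, by norm_num, by norm_num, hp, by norm_num, fun h => hp'.2.1 h.symm,
        fun h => hp'.2.2 h.symm, h3, h5, hpG, e15, e1, e2⟩
    have hC : ¬ ComplementTriangleFree G → Triangle235 G ∨ TriangleP35 G := by
      intro h
      obtain ⟨p, q, r, hp, hq, hr, hpq, hpr, hqr, hpG, hqG, hrG, e1, e2, e3⟩ := not_not.1 h
      obtain ⟨u, -, h1, h2, h3, -, -⟩ := ps_tri hG (ps_orient hG hp hq hpq hpG hqG e1)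
        (ps_orient hG hp hr hpr hpG hrG e2) (ps_orient hG hq hr hqr hqG hrG e3)
      obtain ⟨hu, -, hu3, huG, h3G, k1, -⟩ := h1
      obtain ⟨-, -, hu5, -, h5G, k2, -⟩ := h2
      obtain ⟨-, -, -, -, -, k3, -⟩ := h3
      by_cases hu2 : u = 2
      · subst hu2
        exact Or.inl ⟨huG, h3G, h5G, k1, k2, k3⟩
      · right
        refine ⟨u, hu, ?_, huG, h3G, h5G, by rwa [mul_comm], by rwa [mul_comm], k3⟩
        simp only [Set.mem_insert_iff, Set.mem_singleton_iff, not_or]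
        exact ⟨hu2, hu3, hu5⟩
    have hD : Triangle235 G → TriangleP35 G → False := by
      rintro ⟨h2, h3, h5, e6, e10, e15⟩ ⟨p, hp, hp', hpG, -, -, e1, e2, -⟩
      simp only [Set.mem_insert_iff, Set.mem_singleton_iff, not_or] at hp'
      rw [mul_comm] at e1 e2
      obtain ⟨u, hu, -, -, -, hs, hor⟩ := ps_tri hG
        (ps_orient hG hp Nat.prime_three hp'.2.1 hpG h3 e1)
        (ps_orient hG hp Nat.prime_five hp'.2.2 hpG h5 e2)
        (ps_orient hG Nat.prime_three Nat.prime_five (by norm_num) h3 h5 e15)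
      have hpu : p = u := hu.resolve_right (fun h => h.elim hp'.2.1 hp'.2.2)
      subst hpu
      exact ps_l12 hG hp hp'.1 hp'.2.1 (hor.resolve_left hp'.1) e1 e6 hs
    tauto
end

section
/- Let G be a finite pseudo-solvable group that is not solvable, and suppose G has no element of order 15. Then G has normal subgroups N and M with N ≤ M, both normal in G, such that N is solvable, the quotient M/N is isomorphic to the alternating group A₅, and the quotient G/M is solvable. (In particular, G has exactly one non-solvable chief factor, and it is isomorphic to A₅.) -/
namespace UA5

open Subgroup

lemma card_A5 : Nat.card (alternatingGroup (Fin 5)) = 60 := by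
  rw [nat_card_alternatingGroup]
  simp [Nat.factorial]

instance simple_A5 : IsSimpleGroup (alternatingGroup (Fin 5)) :=
  alternatingGroup.isSimpleGroup (by simp)

lemma not_solv_A5 : ¬ Group.IsSolvable (alternatingGroup (Fin 5)) := by
  intro h
  haveI : Group.IsSolvable (↥(⊤ : Subgroup (alternatingGroup (Fin 5)))) := inferInstance
  apply Equiv.Perm.not_isSolvable_fin_5
  exact Group.isSolvable_of_ker_le_range (alternatingGroup (Fin 5)).subtype Equiv.Perm.sign
    (by rw [Subgroup.range_subtype]; exact le_rfl)

lemma order15 {Γ : Type*} [Group Γ] [Finite Γ] (A : Subgroup Γ) [A.Normal]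
    (hA : Nat.card A = 60) (h5 : 5 ∣ A.index) : ∃ g : Γ, orderOf g = 15 := by
  haveI : Fact (Nat.Prime 3) := ⟨by norm_num⟩
  haveI : Fact (Nat.Prime 5) := ⟨by norm_num⟩
  let P : Sylow 3 A := default
  have hP : Nat.card P = 3 := by
    rw [P.card_eq_multiplicity, hA]
    have : Nat.factorization 60 3 = 1 := by
      rw [show 60 = 3 ^ 1 * 20 by norm_num, Nat.factorization_mul (by norm_num) (by norm_num)]
      have : Nat.factorization 20 3 = 0 := Nat.factorization_eq_zero_of_not_dvd (by norm_num)
      have h3 : Nat.factorization 3 3 = 1 := Nat.Prime.factorization_self (by norm_num)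
      simp [this, h3]
    rw [this]; rfl
  set Q : Subgroup Γ := P.map A.subtype with hQ
  have hQc : Nat.card Q = 3 := by
    rw [hQ, Subgroup.card_map_of_injective A.subtype_injective]; exact hP
  have hF : normalizer (Q : Set Γ) ⊔ A = ⊤ := P.normalizer_sup_eq_top
  have h5' : 5 ∣ Nat.card (normalizer (Q : Set Γ)) := by
    refine dvd_trans ?_ (relIndex_dvd_card (H := A) (K := normalizer (Q : Set Γ)))
    rw [← relIndex_sup_right, hF, relIndex_top_right]; exact h5
  obtain ⟨⟨y, hyN⟩, hy⟩ := exists_prime_orderOf_dvd_card' 5 h5'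
  rw [Subgroup.orderOf_mk] at hy
  obtain ⟨⟨x, hxQ⟩, hx⟩ := exists_prime_orderOf_dvd_card' (G := Q) 3 (by rw [hQc])
  rw [Subgroup.orderOf_mk] at hx
  have hz : zpowers x = Q := by
    apply Subgroup.eq_of_le_of_card_ge (by simpa using hxQ)
    rw [hQc, Nat.card_zpowers, hx]
  have hc : y * x * y⁻¹ ∈ zpowers x := by
    rw [hz]
    exact (Subgroup.mem_normalizer_iff.mp hyN x).mp hxQ
  have hx3 : x ^ 3 = 1 := hx ▸ pow_orderOf_eq_one x
  have hy5 : y ^ 5 = 1 := hy ▸ pow_orderOf_eq_one y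
  have hx1 : x ≠ 1 := by rintro rfl; simp at hx
  have hcomm : Commute y x := by
    classical
    rw [mem_zpowers_iff_mem_range_orderOf, hx] at hc
    obtain ⟨k, hk, hk'⟩ := Finset.mem_image.mp hc
    have hk : k < 3 := Finset.mem_range.mp hk
    interval_cases k
    · exfalso; apply hx1
      simp only [pow_zero] at hk'
      have := hk'.symm
      rwa [mul_inv_eq_one, mul_eq_left] at this
    · simp only [pow_one] at hk'
      exact (eq_mul_inv_iff_mul_eq.mp hk').symm
    · have h2 : y ^ 2 * x * (y ^ 2)⁻¹ = x := by
        calc y ^ 2 * x * (y ^ 2)⁻¹ = y * (y * x * y⁻¹) * y⁻¹ := by simp only [pow_two, mul_inv_rev, mul_assoc]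
          _ = y * x ^ 2 * y⁻¹ := by rw [← hk']
          _ = (y * x * y⁻¹) ^ 2 := by rw [conj_pow]
          _ = x * x ^ 3 := by rw [← hk']; group
          _ = x := by rw [hx3, mul_one]
      have h3 : Commute (y ^ 2) x := mul_inv_eq_iff_eq_mul.mp h2
      have h4 := h3.pow_left 3
      rwa [← pow_mul, show 2 * 3 = 5 + 1 by norm_num, pow_succ, hy5, one_mul] at h4
  refine ⟨y * x, ?_⟩
  rw [hcomm.orderOf_mul_eq_mul_orderOf_of_coprime (by rw [hx, hy]; norm_num), hx, hy]

/-- normal solvable subgroups go to the trivial subgroup of `A₅` -/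
lemma le_ker {M : Type*} [Group M] (f : M →* alternatingGroup (Fin 5))
    (hf : Function.Surjective f) (K : Subgroup M) (hK : K.Normal) (hs : Group.IsSolvable K) :
    K ≤ f.ker := by
  have hn : (K.map f).Normal := hK.map f hf
  rcases hn.eq_bot_or_eq_top with h | h
  · exact (Subgroup.map_eq_bot_iff K).mp h
  · exfalso
    apply not_solv_A5
    refine Group.isSolvable_of_surjective (f := f.comp K.subtype) ?_
    intro a
    obtain ⟨b, hb, rfl⟩ : a ∈ K.map f := h ▸ mem_top a
    exact ⟨⟨b, hb⟩, rfl⟩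

lemma ker_normal {G : Type*} [Group G] (M : Subgroup G) [hM : M.Normal]
    (f : M →* alternatingGroup (Fin 5))
    (hf : Function.Surjective f) (hs : Group.IsSolvable f.ker) :
    (f.ker.map M.subtype).Normal := by
  constructor
  rintro _ ⟨n, hn, rfl⟩ g
  let e : M ≃* M := MulAut.conjNormal g
  have h1 : f.ker.map e.toMonoidHom ≤ f.ker := by
    apply le_ker f hf
    · exact (inferInstance : f.ker.Normal).map _ e.surjective
    · exact Group.isSolvable_of_surjective (f := e.toMonoidHom.subgroupMap f.ker)
        (MonoidHom.subgroupMap_surjective _ _)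
  refine ⟨e n, h1 ⟨n, hn, rfl⟩, ?_⟩
  simp [e]

lemma ker_solv {M M' A : Type*} [Group M] [Group M'] [Group A] (f : M →* A) (i : M' →* M)
    (hi : Function.Injective i) (hs : Group.IsSolvable f.ker) :
    Group.IsSolvable (f.comp i).ker := by
  let j : (f.comp i).ker →* f.ker := (i.comp (f.comp i).ker.subtype).codRestrict f.ker
    (fun x => x.2)
  refine Group.isSolvable_of_isSolvable_injective (f := j) ?_
  intro a b hab
  exact Subtype.ext (hi (congrArg Subtype.val hab))

/-- the inductive property -/
def P (G : Type*) [Group G] : Prop :=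
  Group.IsSolvable G ∨ ∃ (k : ℕ) (f : derivedSeries G k →* alternatingGroup (Fin 5)),
    Function.Surjective f ∧ Group.IsSolvable f.ker

lemma solv_of_derived {G : Type*} [Group G] (k : ℕ) (h : Group.IsSolvable (derivedSeries G k)) :
    Group.IsSolvable G := by
  haveI := derivedSeries_normal G k
  rw [Group.isSolvable_iff_subgroup_quotient (derivedSeries G k)]
  refine ⟨h, ⟨k, ?_⟩⟩
  rw [← map_derivedSeries_eq (QuotientGroup.mk'_surjective (derivedSeries G k)),
    Subgroup.map_eq_bot_iff, QuotientGroup.ker_mk']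

lemma quot_solv {G : Type*} [Group G] (k : ℕ) (h : (derivedSeries G k).Normal) :
    Group.IsSolvable (G ⧸ derivedSeries G k) := by
  refine ⟨k, ?_⟩
  rw [← map_derivedSeries_eq (QuotientGroup.mk'_surjective (derivedSeries G k)),
    Subgroup.map_eq_bot_iff, QuotientGroup.ker_mk']

lemma P_of_le {G : Type*} [Group G] (M : Subgroup G)
    (f : M →* alternatingGroup (Fin 5))
    (hf : Function.Surjective f) (hs : Group.IsSolvable f.ker) (k : ℕ)
    (hk : derivedSeries G k ≤ M) : P G := by
  haveI := derivedSeries_normal G k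
  let f' : derivedSeries G k →* alternatingGroup (Fin 5) := f.comp (Subgroup.inclusion hk)
  have hr : f'.range = ((derivedSeries G k).subgroupOf M).map f := by
    rw [MonoidHom.range_comp, Subgroup.inclusion_range]
  have hn : f'.range.Normal := by
    rw [hr]; exact (inferInstance : ((derivedSeries G k).subgroupOf M).Normal).map f hf
  have hks : Group.IsSolvable f'.ker :=
    ker_solv f _ (Subgroup.inclusion_injective hk) hs
  rcases hn.eq_bot_or_eq_top with h | h
  · left
    apply solv_of_derived k
    have : f'.ker = ⊤ := by
      rw [MonoidHom.range_eq_bot_iff] at h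
      rw [h]; exact MonoidHom.ker_one
    rw [this] at hks
    exact Group.isSolvable_of_surjective (f := (⊤ : Subgroup (derivedSeries G k)).subtype)
      (fun a => ⟨⟨a, mem_top a⟩, rfl⟩)
  · exact Or.inr ⟨k, f', MonoidHom.range_eq_top.mp h, hks⟩

lemma P_congr {G G' : Type*} [Group G] [Group G'] (e : G ≃* G') (h : P G) : P G' := by
  rcases h with h | ⟨k, f, hf, hs⟩
  · left
    exact Group.isSolvable_of_surjective (f := e.toMonoidHom) e.surjective
  · have hm : (derivedSeries G k).map e.toMonoidHom = derivedSeries G' k :=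
      map_derivedSeries_eq e.surjective k
    let e' : derivedSeries G k ≃* (derivedSeries G k).map e.toMonoidHom :=
      e.subgroupMap (derivedSeries G k)
    refine P_of_le ((derivedSeries G k).map e.toMonoidHom) (f.comp e'.symm.toMonoidHom)
      (hf.comp e'.symm.surjective) ?_ k hm.ge
    exact ker_solv f _ e'.symm.injective hs

lemma step {G : Type*} [Group G] [Finite G] (h15 : ¬ ∃ g : G, orderOf g = 15)
    (H : Subgroup G) [H.Normal] (hH : P H)
    (hq : IsCyclic (G ⧸ H) ∨ Nonempty ((G ⧸ H) ≃* alternatingGroup (Fin 5))) : P G := by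
  rcases hH with hH | ⟨k, f, hf, hs⟩
  · rcases hq with hq | ⟨⟨e⟩⟩
    · left
      rw [Group.isSolvable_iff_subgroup_quotient H]
      refine ⟨hH, ?_⟩
      letI := IsCyclic.commGroup (α := G ⧸ H)
      exact Group.isSolvable_of_comm (fun a b => mul_comm a b)
    · let f : (⊤ : Subgroup G) →* alternatingGroup (Fin 5) :=
        (e.toMonoidHom.comp (QuotientGroup.mk' H)).comp (⊤ : Subgroup G).subtype
      refine P_of_le ⊤ f ?_ ?_ 0 le_top
      · exact (e.surjective.comp (QuotientGroup.mk'_surjective H)).comp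
          (fun a => ⟨⟨a, mem_top a⟩, rfl⟩)
      · have hmem : ∀ x : f.ker, ((x : (⊤ : Subgroup G)) : G) ∈ H := by
          intro x
          have h1 : e (QuotientGroup.mk' H ((x : (⊤ : Subgroup G)) : G)) = 1 := x.2
          rw [map_eq_one_iff e e.injective] at h1
          exact (QuotientGroup.eq_one_iff _).mp h1
        let j : f.ker →* H :=
          { toFun := fun x => ⟨_, hmem x⟩
            map_one' := rfl
            map_mul' := fun _ _ => rfl }
        refine Group.isSolvable_of_isSolvable_injective (f := j) ?_
        intro a b hab
        have := congrArg (Subtype.val : H → G) hab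
        exact Subtype.ext (Subtype.ext this)
  · set M : Subgroup G := (derivedSeries H k).map H.subtype with hMdef
    haveI hMn : M.Normal := ConjAct.normal_of_characteristic_of_normal
    let e' : derivedSeries H k ≃* M :=
      (derivedSeries H k).equivMapOfInjective H.subtype H.subtype_injective
    let f₁ : M →* alternatingGroup (Fin 5) := f.comp e'.symm.toMonoidHom
    have hf₁ : Function.Surjective f₁ := hf.comp e'.symm.surjective
    have hs₁ : Group.IsSolvable f₁.ker := ker_solv f _ e'.symm.injective hs
    rcases hq with hq | ⟨⟨e⟩⟩
    · have hd : ∀ k, derivedSeries G (k + 1) ≤ (derivedSeries H k).map H.subtype := by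
        intro k
        induction k with
        | zero =>
          letI := IsCyclic.commGroup (α := G ⧸ H)
          have := Abelianization.commutator_subset_ker (QuotientGroup.mk' H)
          rw [QuotientGroup.ker_mk'] at this
          rw [derivedSeries_zero, ← MonoidHom.range_eq_map, Subgroup.range_subtype]
          exact this
        | succ k ih => exact commutator_le_map_commutator ih ih
      exact P_of_le M f₁ hf₁ hs₁ (k + 1) (hd k)
    · exfalso
      set K : Subgroup G := f₁.ker.map M.subtype with hK
      haveI hKn : K.Normal := ker_normal M f₁ hf₁ hs₁
      have hKM : K ≤ M := Subgroup.map_subtype_le _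
      have hc : Nat.card (M.map (QuotientGroup.mk' K)) = 60 := by
        rw [← Subgroup.relIndex_ker, QuotientGroup.ker_mk', Subgroup.relIndex, hK,
          Subgroup.subgroupOf, Subgroup.comap_map_eq_self_of_injective M.subtype_injective,
          Subgroup.index_ker, MonoidHom.range_eq_top.mpr hf₁, Subgroup.card_top, card_A5]
      haveI : (M.map (QuotientGroup.mk' K)).Normal := hMn.map _ (QuotientGroup.mk'_surjective K)
      have h5 : 5 ∣ (M.map (QuotientGroup.mk' K)).index := by
        rw [Subgroup.index_map_eq _ (QuotientGroup.mk'_surjective K)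
          (by rw [QuotientGroup.ker_mk']; exact hKM)]
        refine dvd_trans ?_ (Subgroup.index_dvd_of_le (Subgroup.map_subtype_le (derivedSeries H k)))
        rw [Subgroup.index_eq_card, Nat.card_congr e.toEquiv, card_A5]
        norm_num
      obtain ⟨g, hg⟩ := order15 _ hc h5
      obtain ⟨g, rfl⟩ := QuotientGroup.mk'_surjective K g
      have hd : 15 ∣ orderOf g := hg ▸ orderOf_map_dvd (QuotientGroup.mk' K) g
      exact h15 ⟨g ^ (orderOf g / 15), orderOf_pow_orderOf_div (orderOf_pos g).ne' hd⟩

end UA5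

/-- A non-solvable pseudo-solvable group with no element of order 15 has exactly one
non-solvable chief factor, isomorphic to `A₅`: there are normal subgroups `N ≤ M` of
`G` with `N` solvable, `M/N ≅ A₅` and `G/M` solvable. -/
theorem unique_A5_section
    (G : Type*) [Group G] [Finite G] (hG : IsPseudoSolvable G) (hns : ¬ IsSolvable G)
    (h15 : ¬ ∃ g : G, orderOf g = 15) :
    ∃ (N M : Subgroup G) (_ : N.Normal) (hMn : M.Normal), N ≤ M ∧
      IsSolvable N ∧
      (∃ hn : (N.subgroupOf M).Normal,
        haveI := hn
        Nonempty ((M ⧸ N.subgroupOf M) ≃* alternatingGroup (Fin 5))) ∧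
      (haveI := hMn
       IsSolvable (G ⧸ M)) := by
  obtain ⟨n, H, h0, hlast, hstep⟩ := hG
  have key : ∀ i : Fin (n + 1), UA5.P (H i) := by
    intro i
    induction i using Fin.induction with
    | zero => rw [h0]; exact Or.inl inferInstance
    | succ i ih =>
      obtain ⟨hle, hN, hq⟩ := hstep i
      haveI := hN
      refine UA5.step ?_ ((H i.castSucc).subgroupOf (H i.succ))
        (UA5.P_congr (Subgroup.subgroupOfEquivOfLe hle).symm ih) hq
      rintro ⟨g, hg⟩
      exact h15 ⟨g, by rw [Subgroup.orderOf_coe, hg]⟩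
  have hP : UA5.P G := by
    have := key (Fin.last n)
    rw [hlast] at this
    exact UA5.P_congr Subgroup.topEquiv this
  rcases hP with h | ⟨k, f, hf, hs⟩
  · exact absurd h hns
  · haveI hMn := derivedSeries_normal G k
    have hsub : (f.ker.map (derivedSeries G k).subtype).subgroupOf (derivedSeries G k) = f.ker :=
      Subgroup.comap_map_eq_self_of_injective (derivedSeries G k).subtype_injective _
    have hn : ((f.ker.map (derivedSeries G k).subtype).subgroupOf (derivedSeries G k)).Normal := by
      rw [hsub]; infer_instance
    refine ⟨f.ker.map (derivedSeries G k).subtype, derivedSeries G k,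
      UA5.ker_normal _ f hf hs, hMn, Subgroup.map_subtype_le _, ?_, ⟨hn, ?_⟩, UA5.quot_solv k hMn⟩
    · exact Group.isSolvable_of_surjective
        (f := (derivedSeries G k).subtype.subgroupMap f.ker)
        (MonoidHom.subgroupMap_surjective _ _)
    · exact ⟨(QuotientGroup.quotientMulEquivOfEq hsub).trans
        (QuotientGroup.quotientKerEquivOfSurjective f hf)⟩
end

section
/- Let G be a finite group and N a solvable normal subgroup of G such that G/N is isomorphic to the alternating group A₅. Suppose there is a prime p ∉ {2,3,5} dividing |N|, and that G contains no element of order 3p and no element of order 5p. Let q be a prime not dividing |G|, let V be a finite vector space over the field with q elements, and let ρ : G → GL(V) be a representation. If no element of order 3 of G has a nonzero fixed vector in V, then no element of order 5 of G has a nonzero fixed vector in V. -/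
theorem aux_norm {G W : Type*} [Group G] [AddCommGroup W] (ρ : G →* AddMonoid.End W) (r : ℕ)
    (hfree : ∀ g : G, orderOf g = r → ∀ w, ρ g w = w → w = 0)
    (g : G) (hg : orderOf g = r) (w : W) :
    ∑ i ∈ Finset.range r, ρ (g ^ i) w = 0 := by
  apply hfree g hg
  rw [map_sum]
  have h1 : ∀ i, ρ g (ρ (g ^ i) w) = ρ (g ^ (i + 1)) w := by
    intro i
    rw [pow_succ', map_mul]; rfl
  simp only [h1]
  have h2 := Finset.sum_range_succ (fun i => ρ (g ^ i) w) r
  have h3 := Finset.sum_range_succ' (fun i => ρ (g ^ i) w) r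
  have h4 : g ^ r = 1 := by rw [← hg]; exact pow_orderOf_eq_one g
  simp only [h4, pow_zero] at h2 h3
  rw [h2] at h3
  exact (add_right_cancel h3).symm

theorem aux_comm_free {G W : Type*} [Group G] [AddCommGroup W] (ρ : G →* AddMonoid.End W) (r : ℕ)
    (hr : r.Prime) (htor : ∀ w : W, r • w = 0 → w = 0)
    (hfree : ∀ g : G, orderOf g = r → ∀ w, ρ g w = w → w = 0) (w : W) (hw : w ≠ 0)
    (x y : G) (hx : orderOf x = r) (hy : orderOf y = r) (hxy : Commute x y) :
    y ∈ Subgroup.zpowers x := by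
  have := Fact.mk hr
  by_contra hn
  have hxr : x ^ r = 1 := by rw [← hx]; exact pow_orderOf_eq_one x
  have hyr : y ^ r = 1 := by rw [← hy]; exact pow_orderOf_eq_one y
  have hord : ∀ i : ℕ, orderOf (y * x ^ i) = r := by
    intro i
    apply orderOf_eq_prime
    · rw [(hxy.symm.pow_right i).mul_pow, hyr, ← pow_mul, mul_comm, pow_mul, hxr]; simp
    · intro h
      apply hn
      rw [eq_inv_of_mul_eq_one_left h]
      exact inv_mem (pow_mem (Subgroup.mem_zpowers x) i)
  have key : ∑ i ∈ Finset.range r, ∑ k ∈ Finset.range r, ρ ((y * x ^ i) ^ k) w = 0 :=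
    Finset.sum_eq_zero fun i _ => aux_norm ρ r hfree _ (hord i) w
  rw [Finset.sum_comm] at key
  have h0 : ∀ k ∈ Finset.range r, k ≠ 0 → ∑ i ∈ Finset.range r, ρ ((y * x ^ i) ^ k) w = 0 := by
    intro k hk hk0
    have hk' : k < r := Finset.mem_range.1 hk
    have ho : orderOf (x ^ k) = r := by
      rw [Nat.Coprime.orderOf_pow, hx]
      rw [hx]
      exact Nat.coprime_of_lt_prime hk0 hk' hr
    have h1 : ∀ i, ρ ((y * x ^ i) ^ k) w = ρ (y ^ k) (ρ ((x ^ k) ^ i) w) := by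
      intro i
      rw [(hxy.symm.pow_right i).mul_pow, ← pow_mul, mul_comm i k, pow_mul, map_mul]; rfl
    simp only [h1]
    rw [← map_sum, aux_norm ρ r hfree _ ho w, map_zero]
  rw [Finset.sum_eq_single 0 h0 (fun h => (h (Finset.mem_range.2 hr.pos)).elim)] at key
  simp at key
  exact hw (htor w key)

theorem aux_cyclic_pgroup (r : ℕ) (hr : r.Prime) (hodd : Odd r) (n : ℕ) :
    ∀ (P : Type*) [Group P] [Finite P], Nat.card P = r ^ n →
    (∀ x y : P, orderOf x = r → orderOf y = r → Commute x y → y ∈ Subgroup.zpowers x) →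
    IsCyclic P := by
  have := Fact.mk hr
  induction n with
  | zero =>
    intro P _ _ hc _
    apply isCyclic_of_card_dvd_prime (p := r)
    simp [hc]
  | succ n ih =>
    intro P _ _ hc hcond
    rcases Nat.eq_zero_or_pos n with h0 | hn
    · subst h0
      apply isCyclic_of_card_dvd_prime (p := r)
      simp [hc]
    obtain ⟨A, hA⟩ := Sylow.exists_subgroup_card_pow_prime (G := P) r (n := n)
      (by rw [hc]; exact pow_dvd_pow _ (Nat.le_succ n))
    have hcA : IsCyclic A := by
      apply ih A hA
      intro x y hx hy hxy
      have := hcond x y (by simpa using hx) (by simpa using hy)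
        (congrArg Subtype.val hxy)
      obtain ⟨k, hk⟩ := this
      exact ⟨k, Subtype.ext (by simpa using hk)⟩
    have hidx : A.index = r := by
      have := A.card_mul_index
      rw [hA, hc, pow_succ] at this
      exact Nat.eq_of_mul_eq_mul_left (pow_pos hr.pos n) this
    have hAn : A.Normal := by
      apply Subgroup.normal_of_index_eq_minFac_card
      rw [hidx, hc, hr.pow_minFac (Nat.succ_ne_zero n)]
    obtain ⟨⟨a, haA⟩, ha⟩ := hcA.exists_generator
    have hgen : ∀ x ∈ A, ∃ k : ℤ, x = a ^ k := by
      intro x hx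
      obtain ⟨k, hk⟩ := ha ⟨x, hx⟩
      exact ⟨k, by simpa using (congrArg Subtype.val hk).symm⟩
    have hoa : orderOf a = r ^ n := by
      rw [← hA, ← orderOf_eq_card_of_forall_mem_zpowers ha]
      simp
    obtain ⟨b, hb⟩ : ∃ b, b ∉ A := by
      by_contra! h
      have : A = ⊤ := by ext; simp [h]
      rw [this, Subgroup.index_top] at hidx
      exact hr.one_lt.ne hidx
    obtain ⟨m, hm⟩ := hgen _ (hAn.conj_mem a haA b)
    obtain ⟨s, hs⟩ := hgen (b ^ r) (by rw [← hidx]; exact A.pow_index_mem b)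
    have hconj : ∀ (k : ℕ) (i : ℤ), b ^ k * a ^ i = a ^ (i * m ^ k) * b ^ k := by
      intro k
      induction k with
      | zero => intro i; simp
      | succ k ihk =>
        intro i
        have h1 : b * a ^ i = a ^ (i * m) * b := by
          rw [mul_comm i m, zpow_mul, ← hm, conj_zpow]; group
        rw [pow_succ, mul_assoc, h1, ← mul_assoc, ihk, mul_assoc]
        congr 2
        ring
    have hmr : (r : ℤ) ∣ m - 1 := by
      have h1 := hconj r 1
      rw [hs, ← zpow_add, ← zpow_add, zpow_eq_zpow_iff_modEq, hoa] at h1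
      have h2 : ((r ^ n : ℕ) : ℤ) ∣ m ^ r - 1 := by
        have := h1.dvd
        convert this using 1; ring
      have h3 : (r : ℤ) ∣ m ^ r - 1 := dvd_trans (by push_cast; exact dvd_pow_self _ hn.ne') h2
      rw [← ZMod.intCast_zmod_eq_zero_iff_dvd] at h3 ⊢
      · push_cast at h3 ⊢
        rwa [ZMod.pow_card] at h3
    by_cases hrs : (r : ℤ) ∣ s
    · obtain ⟨c, hcm⟩ := hmr
      obtain ⟨s', rfl⟩ := hrs
      have hS := odd_sq_dvd_geom_sum₂_sub (R := ℤ) (a := 1) (b := c) (p := r) hodd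
      simp only [one_pow, mul_one] at hS
      have hmc : 1 + (r : ℤ) * c = m := by linarith
      rw [hmc] at hS
      obtain ⟨e, he⟩ := hS
      obtain ⟨α, β, hab⟩ : IsCoprime (1 + (r : ℤ) * e) ((r : ℤ) ^ n) := by
        apply IsCoprime.pow_right
        exact ⟨1, -e, by ring⟩
      have hpow : ∀ (i : ℤ) (k : ℕ), (a ^ i * b) ^ k =
          a ^ (i * ∑ j ∈ Finset.range k, m ^ j) * b ^ k := by
        intro i k
        induction k with
        | zero => simp
        | succ k ihk =>
          rw [pow_succ, ihk, Finset.sum_range_succ, mul_assoc, ← mul_assoc (b ^ k), hconj, pow_succ,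
            mul_add, zpow_add]
          simp only [mul_assoc]
      have hw := hpow (-s' * α) r
      have h1 : (a ^ (-s' * α) * b) ^ r = 1 := by
        rw [hw, hs, ← zpow_add]
        have : -s' * α * ∑ j ∈ Finset.range r, m ^ j + (r : ℤ) * s' = ((r ^ n : ℕ) : ℤ) * (r * s' * β) := by
          have h2 : ∑ j ∈ Finset.range r, m ^ j = r + r ^ 2 * e := by linarith
          rw [h2]
          push_cast
          linear_combination (-(r : ℤ) * s') * hab
        rw [this, zpow_mul, zpow_natCast, ← hoa, pow_orderOf_eq_one, one_zpow]
      exfalso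
      set w := a ^ (-s' * α) * b with hwdef
      have hwA : w ∉ A := by
        intro h
        exact hb ((A.mul_mem_cancel_left (A.zpow_mem haA _)).1 h)
      have how : orderOf w = r := orderOf_eq_prime h1 (fun h => hwA (h ▸ A.one_mem))
      set z := a ^ (r ^ (n - 1)) with hz
      have hnn : r ^ n = r ^ (n - 1) * r := by
        rw [← pow_succ]; congr 1; omega
      have hoz : orderOf z = r := by
        rw [hz, orderOf_pow_of_dvd (pow_pos hr.pos _).ne' (by rw [hoa, hnn]; exact dvd_mul_right _ _), hoa, hnn]
        exact Nat.mul_div_cancel_left _ (pow_pos hr.pos _)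
      have hbz : b * z = z * b := by
        have h2 := hconj 1 ((r ^ (n - 1) : ℕ) : ℤ)
        simp only [pow_one] at h2
        rw [zpow_natCast] at h2
        rw [hz, h2]
        congr 1
        rw [← zpow_natCast, zpow_eq_zpow_iff_modEq, hoa]
        apply Int.ModEq.symm
        rw [Int.modEq_iff_dvd, hnn]
        refine ⟨c, ?_⟩
        push_cast
        rw [← hmc]; ring
      have hcomm : Commute z w := by
        apply Commute.mul_right
        · exact (Commute.refl a).pow_left _ |>.zpow_right _
        · exact hbz.symm
      have := hcond z w hoz how hcomm
      exact hwA ((Subgroup.zpowers_le.2 (A.pow_mem haA _)) this)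
    · apply isCyclic_of_orderOf_eq_card b
      have h1 : orderOf (b ^ r) = r ^ n := by
        rw [hs, ← hoa]
        have hcop : IsCoprime s ((orderOf a : ℕ) : ℤ) := by
          rw [hoa]; push_cast
          apply IsCoprime.pow_right
          exact (((Nat.prime_iff_prime_int.1 hr).coprime_iff_not_dvd).2 hrs).symm
        apply Nat.dvd_antisymm
        · exact orderOf_dvd_of_mem_zpowers ⟨s, rfl⟩
        · obtain ⟨u, v, huv⟩ := hcop
          apply orderOf_dvd_of_mem_zpowers
          refine ⟨u, ?_⟩
          change (a ^ s) ^ u = a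
          rw [← zpow_mul]
          have : s * u = 1 - (orderOf a : ℤ) * v := by linarith
          rw [this, zpow_sub, zpow_mul, zpow_natCast, pow_orderOf_eq_one]; simp
      have hrb : r ∣ orderOf b := by
        have hd : orderOf b ∣ r ^ (n + 1) := by rw [← hc]; exact orderOf_dvd_natCard b
        obtain ⟨k, hk, hk2⟩ := (Nat.dvd_prime_pow hr).1 hd
        rw [hk2]
        rcases Nat.eq_zero_or_pos k with hk0 | hk0
        · rw [hk0, pow_zero, orderOf_eq_one_iff] at hk2
          exact (hb (hk2 ▸ A.one_mem)).elim
        · exact dvd_pow_self _ hk0.ne'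
      rw [orderOf_pow_of_dvd hr.ne_zero hrb] at h1
      rw [hc, pow_succ, ← h1, Nat.div_mul_cancel hrb]

theorem aux_cyclic_sub {G W : Type*} [Group G] [Finite G] [AddCommGroup W]
    (ρ : G →* AddMonoid.End W) (r : ℕ)
    (hr : r.Prime) (hodd : Odd r) (htor : ∀ w : W, r • w = 0 → w = 0)
    (hfree : ∀ g : G, orderOf g = r → ∀ w, ρ g w = w → w = 0) (w : W) (hw : w ≠ 0)
    (P : Subgroup G) (hP : IsPGroup r P) : IsCyclic P := by
  have := Fact.mk hr
  obtain ⟨n, hn⟩ := IsPGroup.iff_card.1 hP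
  apply aux_cyclic_pgroup r hr hodd n P hn
  intro x y hx hy hxy
  obtain ⟨k, hk⟩ := aux_comm_free ρ r hr htor hfree w hw x y (by simpa using hx) (by simpa using hy)
    (congrArg Subtype.val hxy)
  exact ⟨k, Subtype.ext (by simpa using hk)⟩

open scoped commutatorElement in
theorem aux_cover {G A : Type*} [Group G] [Finite G] [Group A] (f : G →* A)
    (hf : Function.Surjective f) (hA : commutator A = ⊤) (r : ℕ) [Fact r.Prime]
    (R : Sylow r f.ker) (hR : IsCyclic ((R : Subgroup f.ker).map f.ker.subtype)) :
    (Subgroup.centralizer (((R : Subgroup f.ker).map f.ker.subtype : Subgroup G) : Set G)).map f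
      = ⊤ := by
  set R' := (R : Subgroup f.ker).map f.ker.subtype with hR'
  have h1 : Subgroup.normalizer (R' : Set G) ⊔ f.ker = ⊤ := Sylow.normalizer_sup_eq_top R
  have h2 : (Subgroup.normalizer (R' : Set G)).map f = ⊤ := by
    have := congrArg (Subgroup.map f) h1
    rw [Subgroup.map_sup, (Subgroup.map_eq_bot_iff _).2 le_rfl, sup_bot_eq,
      ← MonoidHom.range_eq_map, MonoidHom.range_eq_top.2 hf] at this
    exact this
  have h3 : ⁅Subgroup.normalizer (R' : Set G), Subgroup.normalizer (R' : Set G)⁆ ≤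
      Subgroup.centralizer (R' : Set G) := by
    rw [Subgroup.commutator_le]
    intro a ha b hb
    have h4 : R'.normalizerMonoidHom ⁅(⟨a, ha⟩ : Subgroup.normalizer (R' : Set G)), ⟨b, hb⟩⁆ = 1 := by
      rw [map_commutatorElement, commutatorElement_eq_one_iff_commute]
      obtain ⟨m, hm⟩ := MonoidHom.map_cyclic (R'.normalizerMonoidHom ⟨a, ha⟩).toMonoidHom
      ext x
      congr 1
      simp only [MulAut.mul_apply]
      have hm' : ∀ g, R'.normalizerMonoidHom ⟨a, ha⟩ g = g ^ m := hm
      rw [hm', hm', map_zpow]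
    rw [← MonoidHom.mem_ker, Subgroup.normalizerMonoidHom_ker, Subgroup.mem_subgroupOf] at h4
    exact h4
  rw [eq_top_iff]
  refine le_trans ?_ (Subgroup.map_mono h3)
  rw [Subgroup.map_commutator, h2, ← commutator_def, hA]

theorem aux_sylow_ne_bot {K : Type*} [Group K] [Finite K] (r : ℕ) [Fact r.Prime]
    (h : r ∣ Nat.card K) (R : Sylow r K) : ∃ z : K, z ∈ R ∧ orderOf z = r := by
  have h1 : r ∣ Nat.card R := R.dvd_card_of_dvd_card h
  obtain ⟨z, hz⟩ := exists_prime_orderOf_dvd_card' r h1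
  exact ⟨z, z.2, by simpa using hz⟩

theorem aux_dvd_of_map_top {G A : Type*} [Group G] [Group A] (f : G →* A) (H : Subgroup G)
    (h : H.map f = ⊤) : Nat.card A ∣ Nat.card H := by
  apply Subgroup.card_dvd_of_surjective (f.comp H.subtype)
  intro a
  have : a ∈ H.map f := by rw [h]; trivial
  obtain ⟨x, hx, rfl⟩ := this
  exact ⟨⟨x, hx⟩, rfl⟩

theorem aux_Y {G A W : Type*} [Group G] [Finite G] [Group A] [AddCommGroup W]
    (f : G →* A) (hf : Function.Surjective f) (hA : commutator A = ⊤)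
    (ρ : G →* AddMonoid.End W) (r : ℕ) (hrA : r ∣ Nat.card A)
    (hr : r.Prime) (hodd : Odd r) (htor : ∀ w : W, r • w = 0 → w = 0)
    (hfree : ∀ g : G, orderOf g = r → ∀ w, ρ g w = w → w = 0) (w : W) (hw : w ≠ 0) :
    ¬ r ∣ Nat.card f.ker := by
  have := Fact.mk hr
  intro hdvd
  let R : Sylow r f.ker := default
  set R' := (R : Subgroup f.ker).map f.ker.subtype with hR'
  have hRp : IsPGroup r R' := R.isPGroup'.map _
  have hRc : IsCyclic R' := aux_cyclic_sub ρ r hr hodd htor hfree w hw R' hRp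
  have hcov := aux_cover f hf hA r R hRc
  rw [← hR'] at hcov
  set C := Subgroup.centralizer (R' : Set G) with hC
  obtain ⟨z, hzR, hzo⟩ := aux_sylow_ne_bot r hdvd R
  have hzR' : (z : G) ∈ R' := ⟨z, hzR, rfl⟩
  have hzo' : orderOf (z : G) = r := (Subgroup.orderOf_coe z).trans hzo
  have hzC : (z : G) ∈ C := by
    rw [hC, Subgroup.mem_centralizer_iff]
    intro h hh
    have hcg := isMulCommutative_iff.1 hRc.isMulCommutative ⟨h, hh⟩ ⟨(z : G), hzR'⟩
    exact congrArg Subtype.val hcg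
  let zC : C := ⟨z, hzC⟩
  have hzCo : orderOf zC = r := by rw [← hzo']; exact (Subgroup.orderOf_coe zC).symm
  have hzcen : ∀ c : C, c * zC = zC * c := by
    intro c
    apply Subtype.ext
    exact ((Subgroup.mem_centralizer_iff.1 c.2) z hzR').symm
  let P : Sylow r C := default
  have hPc : IsCyclic P := aux_cyclic_sub (ρ.comp C.subtype) r hr hodd htor
    (fun g hg => hfree g (by simpa using hg)) w hw P P.isPGroup'
  have hfC : Function.Surjective (f.comp C.subtype) := by
    intro a
    have : a ∈ C.map f := by rw [hcov]; trivial
    obtain ⟨x, hx, rfl⟩ := this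
    exact ⟨⟨x, hx⟩, rfl⟩
  have hcc : r ∣ Nat.card (commutator C) := by
    refine hrA.trans (aux_dvd_of_map_top (f.comp C.subtype) _ ?_)
    rw [commutator_def, Subgroup.map_commutator, ← MonoidHom.range_eq_map,
      MonoidHom.range_eq_top.2 hfC, ← commutator_def, hA]
  have hci : ¬ r ∣ (commutator C).index := by
    rcases P.not_dvd_card_commutator_or_not_dvd_index_commutator with h | h
    · exact (h hcc).elim
    · exact h
  have hzpow : ∀ (k : ℕ) (H : Subgroup C), ¬ r ∣ k → zC ^ k ∈ H → zC ∈ H := by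
    intro k H hk hH
    have hcop : (orderOf zC).Coprime k := by rw [hzCo]; exact (hr.coprime_iff_not_dvd).2 hk
    obtain ⟨m, hm⟩ := exists_pow_eq_self_of_coprime hcop.symm
    rw [← hm]
    exact H.pow_mem hH m
  have hzcomm : zC ∈ commutator C := hzpow _ _ hci ((commutator C).pow_index_mem zC)
  let _ : CommGroup P := IsCyclic.commGroup
  have htr := MonoidHom.transfer_eq_pow (H := (P : Subgroup C)) (MonoidHom.id P) zC (by
    intro k g₀ _
    have : g₀ * zC ^ k = zC ^ k * g₀ := (Commute.pow_right (hzcen g₀) k)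
    rw [mul_assoc, ← this, inv_mul_cancel_left])
  have hker := Abelianization.commutator_subset_ker
    (MonoidHom.transfer (H := (P : Subgroup C)) (MonoidHom.id P)) hzcomm
  rw [MonoidHom.mem_ker, htr] at hker
  have h1 : zC ^ (P : Subgroup C).index = 1 := congrArg Subtype.val hker
  have h2 := orderOf_dvd_of_pow_eq_one h1
  rw [hzCo] at h2
  exact P.not_dvd_index h2

open scoped IsMulCommutative in
/-- conjugation action on an abelian normal subgroup -/
def auxConjEnd {G : Type*} [Group G] (M : Subgroup G) [M.Normal] [IsMulCommutative M] :
    G →* AddMonoid.End (Additive M) where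
  toFun g := MonoidHom.toAdditive (MulAut.conjNormal g : MulAut M).toMonoidHom
  map_one' := by
    ext x
    simp
    rfl
  map_mul' a b := by
    ext x
    simp
    rfl

theorem aux_exists_M {G : Type*} [Group G] [Finite G] (N : Subgroup G) [N.Normal]
    [Group.IsSolvable N] (hN : N ≠ ⊥) :
    ∃ (M : Subgroup G) (s : ℕ), M.Normal ∧ IsMulCommutative M ∧ M ≤ N ∧ M ≠ ⊥ ∧ s.Prime ∧
      ∀ x ∈ M, x ^ s = 1 := by
  classical
  have hex : ∃ n, derivedSeries N n = ⊥ := (Group.isSolvable_def N).1 inferInstance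
  have h0 : Nat.find hex ≠ 0 := by
    intro h
    have := Nat.find_spec hex
    rw [h, derivedSeries_zero] at this
    apply hN
    have h2 := congrArg (Subgroup.map N.subtype) this
    rw [← MonoidHom.range_eq_map, Subgroup.range_subtype, Subgroup.map_bot] at h2
    exact h2
  obtain ⟨n, hn⟩ := Nat.exists_eq_succ_of_ne_zero h0
  have h1 : derivedSeries N (n + 1) = ⊥ := by
    have h := Nat.find_spec hex
    rwa [hn] at h
  have h2 : derivedSeries N n ≠ ⊥ := Nat.find_min hex (by omega)
  have hchar := derivedSeries_characteristic N n
  have hcomm : ∀ x ∈ derivedSeries N n, ∀ y ∈ derivedSeries N n, x * y = y * x := by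
    intro x hx y hy
    rw [derivedSeries_succ, eq_bot_iff, Subgroup.commutator_le] at h1
    exact commutatorElement_eq_one_iff_mul_comm.1 (Subgroup.mem_bot.1 (h1 x hx y hy))
  set D := (derivedSeries N n).map N.subtype with hD
  have hDn : D.Normal := inferInstance
  have hDN : D ≤ N := Subgroup.map_subtype_le _
  have hDc : ∀ x ∈ D, ∀ y ∈ D, x * y = y * x := by
    rintro _ ⟨x, hx, rfl⟩ _ ⟨y, hy, rfl⟩
    exact congrArg N.subtype (hcomm x hx y hy)
  have hDb : D ≠ ⊥ := by
    rw [hD, Ne, Subgroup.map_eq_bot_iff_of_injective _ N.subtype_injective]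
    exact h2
  have hDcard : Nat.card D ≠ 1 := fun h => hDb (Subgroup.card_eq_one.1 h)
  obtain ⟨s, hs, hsD⟩ := Nat.exists_prime_and_dvd hDcard
  have := Fact.mk hs
  obtain ⟨z, hz⟩ := exists_prime_orderOf_dvd_card' s hsD
  let M : Subgroup G :=
    { carrier := {x | x ∈ D ∧ x ^ s = 1}
      one_mem' := ⟨D.one_mem, one_pow s⟩
      mul_mem' := by
        rintro a b ⟨ha, ha'⟩ ⟨hb, hb'⟩
        refine ⟨D.mul_mem ha hb, ?_⟩
        rw [(show Commute a b from hDc a ha b hb).mul_pow, ha', hb', one_mul]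
      inv_mem' := by
        rintro a ⟨ha, ha'⟩
        exact ⟨D.inv_mem ha, by rw [inv_pow, ha', inv_one]⟩ }
  refine ⟨M, s, ⟨?_⟩, ?_, fun x hx => hDN hx.1, ?_, hs, fun x hx => hx.2⟩
  · rintro x ⟨hx, hx'⟩ g
    exact ⟨hDn.conj_mem x hx g, by rw [conj_pow, hx']; simp⟩
  · rw [isMulCommutative_iff]
    rintro ⟨a, ha⟩ ⟨b, hb⟩
    exact Subtype.ext (hDc a ha.1 b hb.1)
  · intro h
    have hz' : (z : G) ∈ M := ⟨z.2, by
      have := pow_orderOf_eq_one z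
      rw [hz] at this
      exact congrArg Subtype.val this⟩
    rw [h, Subgroup.mem_bot] at hz'
    have : z = 1 := Subtype.ext hz'
    rw [this, orderOf_one] at hz
    exact hs.one_lt.ne hz

open scoped IsMulCommutative in
theorem aux_conj_props {G : Type*} [Group G] (M : Subgroup G) [M.Normal] [IsMulCommutative M]
    (s r : ℕ) (hs : s.Prime) (hr : r.Prime) (hsr : s ≠ r) (hM : ∀ x ∈ M, x ^ s = 1)
    (hno : ¬ ∃ g : G, orderOf g = r * s) :
    (∀ w : Additive M, r • w = 0 → w = 0) ∧
    (∀ g : G, orderOf g = r → ∀ w, auxConjEnd M g w = w → w = 0) := by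
  have := Fact.mk hs
  have hord : ∀ x : M, x ≠ 1 → orderOf (x : G) = s := by
    intro x hx
    apply orderOf_eq_prime (hM x x.2)
    intro h
    exact hx (Subtype.ext h)
  have hcop : r.Coprime s := (Nat.coprime_primes hr hs).2 hsr.symm
  constructor
  · intro w hw
    by_contra hne
    have h1 : (Additive.toMul w : M) ^ r = 1 := hw
    have h2 := hord (Additive.toMul w) hne
    have h3 : ((Additive.toMul w : M) : G) ^ r = 1 := congrArg Subtype.val h1
    have h4 := orderOf_dvd_of_pow_eq_one h3
    rw [h2, Nat.prime_dvd_prime_iff_eq hs hr] at h4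
    exact hsr h4
  · intro g hg w hw
    by_contra hne
    have h2 := hord (Additive.toMul w) hne
    have h1 : (MulAut.conjNormal g : MulAut M) (Additive.toMul w) = Additive.toMul w := hw
    have h3 := congrArg Subtype.val h1
    rw [MulAut.conjNormal_apply] at h3
    have h4 : Commute g ((Additive.toMul w : M) : G) := by
      rw [mul_inv_eq_iff_eq_mul] at h3
      exact h3
    apply hno
    refine ⟨_, (h4.orderOf_mul_eq_mul_orderOf_of_coprime ?_).trans ?_⟩
    · rw [hg, h2]; exact hcop
    · rw [hg, h2]

theorem aux_card_ker {G A : Type*} [Group G] [Group A] (f : G →* A)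
    (hf : Function.Surjective f) : Nat.card f.ker * Nat.card A = Nat.card G := by
  have h := f.ker.card_mul_index
  rw [Subgroup.index_ker, MonoidHom.range_eq_top.2 hf, Subgroup.card_top] at h
  exact h

open scoped IsMulCommutative in
theorem aux_X {A : Type*} [Group A] [Finite A] (hA : commutator A = ⊤) (r p : ℕ)
    (hr : r.Prime) (hrodd : Odd r) (hp : p.Prime) (hpodd : Odd p) (hpr : p ≠ r)
    (hrA : r ∣ Nat.card A) (n : ℕ) :
    ∀ (G : Type*) [Group G] [Finite G] (f : G →* A), Nat.card G = n → Function.Surjective f →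
      Group.IsSolvable f.ker → p ∣ Nat.card f.ker → (¬ ∃ g : G, orderOf g = r * p) →
      ¬ r ∣ Nat.card f.ker := by
  have := Fact.mk hr
  have := Fact.mk hp
  induction n using Nat.strong_induction_on with
  | _ n ih =>
  intro G _ _ f hn hf hsol hpd hno
  have hNb : f.ker ≠ ⊥ := by
    intro h
    rw [h, Subgroup.card_bot] at hpd
    exact hp.one_lt.ne' (Nat.dvd_one.1 hpd)
  obtain ⟨M, s, hMn, hMc, hMN, hMb, hs, hMs⟩ := aux_exists_M f.ker hNb
  obtain ⟨⟨m, hmM⟩, hm⟩ : ∃ m : M, m ≠ 1 := by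
    by_contra! h
    apply hMb
    rw [eq_bot_iff]
    intro x hx
    exact congrArg Subtype.val (h ⟨x, hx⟩)
  by_cases hsp : s = p
  · subst hsp
    obtain ⟨h1, h2⟩ := aux_conj_props M s r hs hr hpr hMs hno
    exact aux_Y f hf hA (auxConjEnd M) r hrA hr hrodd h1 h2 (Additive.ofMul (⟨m, hmM⟩ : M)) hm
  by_cases hsr : s = r
  · subst hsr
    exfalso
    obtain ⟨h1, h2⟩ := aux_conj_props M s p hs hp hpr.symm hMs (by rwa [mul_comm])
    let Q : Sylow p f.ker := default
    have hQp : IsPGroup p ((Q : Subgroup f.ker).map f.ker.subtype) := Q.isPGroup'.map _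
    have hQc := aux_cyclic_sub (auxConjEnd M) p hp hpodd h1 h2 (Additive.ofMul (⟨m, hmM⟩ : M)) hm _ hQp
    have hcov := aux_cover f hf hA p Q hQc
    have hd := hrA.trans (aux_dvd_of_map_top f _ hcov)
    obtain ⟨c, hc⟩ := exists_prime_orderOf_dvd_card' s hd
    obtain ⟨z, hzQ, hzo⟩ := aux_sylow_ne_bot p hpd Q
    have hzo' : orderOf (z : G) = p := (Subgroup.orderOf_coe z).trans hzo
    have hco' : orderOf (c : G) = s := (Subgroup.orderOf_coe c).trans hc
    have hcz : Commute (c : G) (z : G) :=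
      ((Subgroup.mem_centralizer_iff.1 c.2) z ⟨z, hzQ, rfl⟩).symm
    apply hno
    refine ⟨_, (hcz.orderOf_mul_eq_mul_orderOf_of_coprime ?_).trans ?_⟩
    · rw [hzo', hco']; exact (Nat.coprime_primes hr hp).2 hpr.symm
    · rw [hzo', hco']
  · have := Fact.mk hs
    have hMk : ∀ x ∈ M, f x = 1 := fun x hx => hMN hx
    let f' : G ⧸ M →* A := QuotientGroup.lift M f hMk
    have hf' : Function.Surjective f' := by
      intro a
      obtain ⟨g, rfl⟩ := hf a
      exact ⟨(g : G ⧸ M), rfl⟩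
    have hcM : Nat.card (G ⧸ M) * Nat.card M = Nat.card G :=
      (Subgroup.card_eq_card_quotient_mul_card_subgroup M).symm
    have hM1 : 1 < Nat.card M := by
      rw [Subgroup.one_lt_card_iff_ne_bot]; exact hMb
    have hlt : Nat.card (G ⧸ M) < n := by
      rw [← hn, ← hcM]
      exact lt_mul_of_one_lt_right Nat.card_pos hM1
    have hk : Nat.card f.ker = Nat.card f'.ker * Nat.card M := by
      have e1 := aux_card_ker f hf
      have e2 := aux_card_ker f' hf'
      rw [← hcM, ← e2] at e1
      apply Nat.eq_of_mul_eq_mul_right (Nat.card_pos (α := A))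
      rw [e1]; ring
    have hMp : IsPGroup s M := fun x => ⟨1, by
      rw [pow_one]; exact Subtype.ext (hMs x x.2)⟩
    obtain ⟨k, hkM⟩ := IsPGroup.iff_card.1 hMp
    have hdvd : ∀ t : ℕ, t.Prime → s ≠ t → t ∣ Nat.card f.ker → t ∣ Nat.card f'.ker := by
      intro t ht hst h
      rw [hk, hkM] at h
      rcases ht.dvd_mul.1 h with h | h
      · exact h
      · exact (hst ((Nat.prime_dvd_prime_iff_eq ht hs).1 (ht.dvd_of_dvd_pow h)).symm).elim
    have hsol' : Group.IsSolvable f'.ker := by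
      let φ : f.ker →* f'.ker := ((QuotientGroup.mk' M).comp f.ker.subtype).codRestrict f'.ker
        (fun x => x.2)
      apply Group.isSolvable_of_surjective (f := φ)
      rintro ⟨x, hx⟩
      obtain ⟨g, rfl⟩ := QuotientGroup.mk_surjective x
      exact ⟨⟨g, hx⟩, rfl⟩
    intro hrd
    refine ih _ hlt (G ⧸ M) f' rfl hf' hsol' (hdvd p hp hsp hpd) ?_ (hdvd r hr hsr hrd)
    rintro ⟨x, hx⟩
    obtain ⟨g, rfl⟩ := QuotientGroup.mk_surjective x
    have h1 : r * p ∣ orderOf g := by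
      rw [← hx]; exact orderOf_map_dvd (QuotientGroup.mk' M) g
    obtain ⟨e, he⟩ := h1
    have hpos := orderOf_pos g
    have he0 : e ≠ 0 := by
      rintro rfl
      rw [mul_zero] at he
      omega
    apply hno
    refine ⟨g ^ e, ?_⟩
    rw [orderOf_pow_of_dvd he0 (he ▸ dvd_mul_left _ _), he]
    exact Nat.mul_div_cancel _ (Nat.pos_of_ne_zero he0)

theorem aux_core {G W : Type*} [Group G] [AddCommGroup W] (ρ : G →* AddMonoid.End W)
    (h5 : ∀ w : W, 5 • w = 0 → w = 0)
    (hfree : ∀ g : G, orderOf g = 3 → ∀ w, ρ g w = w → w = 0)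
    (a b : G) (ha : orderOf a = 3) (hb : orderOf b = 3) (k : ℕ)
    (hy : ((a * b) ^ k) ^ 5 = 1) (w : W) (hw : ρ ((a * b) ^ k) w = w)
    (h : G) (hh : h ∈ Subgroup.closure {a, b}) :
    ρ ((a * b) ^ k) (ρ h w) = ρ h w := by
  have hquad : ∀ x : G, orderOf x = 3 → ρ x * ρ x = -1 - ρ x ∧ ρ x⁻¹ = -1 - ρ x := by
    intro x hx
    have h1 : 1 + ρ x + ρ x * ρ x = 0 := by
      ext v
      have := aux_norm ρ 3 hfree x hx v
      simp only [Finset.sum_range_succ, Finset.sum_range_zero, pow_zero, pow_one, zero_add,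
        map_one, pow_two, map_mul] at this
      exact this
    have h2 : ρ x * ρ x = -1 - ρ x := by
      rw [← sub_eq_zero, ← h1]; abel
    refine ⟨h2, ?_⟩
    rw [← h2, ← map_mul]
    congr 1
    have := pow_orderOf_eq_one x
    rw [hx, pow_succ, pow_two] at this
    exact (eq_inv_of_mul_eq_one_left this).symm
  obtain ⟨hA, hA'⟩ := hquad a ha
  obtain ⟨hB, hB'⟩ := hquad b hb
  set g := a * b with hg
  set t := ρ g + ρ g⁻¹ with ht
  have ht' : t = ρ a * ρ b + (-1 - ρ b) * (-1 - ρ a) := by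
    rw [ht, hg, mul_inv_rev, map_mul, map_mul, hA', hB']
  have hat : Commute (ρ a) t := by
    rw [ht', Commute, SemiconjBy, ← sub_eq_zero]
    have : ρ a * (ρ a * ρ b + (-1 - ρ b) * (-1 - ρ a)) -
      (ρ a * ρ b + (-1 - ρ b) * (-1 - ρ a)) * ρ a =
      (ρ a * ρ a) * ρ b + ρ a * ρ b - ρ b * ρ a - ρ b * (ρ a * ρ a) := by noncomm_ring
    rw [this, hA]
    noncomm_ring
  have hbt : Commute (ρ b) t := by
    rw [ht', Commute, SemiconjBy, ← sub_eq_zero]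
    have : ρ b * (ρ a * ρ b + (-1 - ρ b) * (-1 - ρ a)) -
      (ρ a * ρ b + (-1 - ρ b) * (-1 - ρ a)) * ρ b =
      (ρ b * ρ b) * ρ a + ρ b * ρ a - ρ a * ρ b - ρ a * (ρ b * ρ b) := by noncomm_ring
    rw [this, hB]
    noncomm_ring
  have hT : ∀ X : AddMonoid.End W, Commute X t → ∀ n : ℕ,
      Commute X (ρ (g ^ n) + ρ (g ^ n)⁻¹) ∧ Commute X (ρ (g ^ (n + 1)) + ρ (g ^ (n + 1))⁻¹) := by
    intro X hX n
    induction n with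
    | zero =>
      constructor
      · simp only [pow_zero, inv_one, map_one]
        exact (Commute.one_right X).add_right (Commute.one_right X)
      · simpa using hX
    | succ n ihn =>
      refine ⟨ihn.2, ?_⟩
      have e : ρ (g ^ (n + 1 + 1)) + ρ (g ^ (n + 1 + 1))⁻¹ =
          t * (ρ (g ^ (n + 1)) + ρ (g ^ (n + 1))⁻¹) - (ρ (g ^ n) + ρ (g ^ n)⁻¹) := by
        rw [ht, add_mul, mul_add, mul_add, ← map_mul, ← map_mul, ← map_mul, ← map_mul]
        have e1 : g * g ^ (n + 1) = g ^ (n + 1 + 1) := by group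
        have e2 : g * (g ^ (n + 1))⁻¹ = (g ^ n)⁻¹ := by group
        have e3 : g⁻¹ * g ^ (n + 1) = g ^ n := by group
        have e4 : g⁻¹ * (g ^ (n + 1))⁻¹ = (g ^ (n + 1 + 1))⁻¹ := by group
        rw [e1, e2, e3, e4]
        abel
      rw [e]
      exact (hX.mul_right ihn.2).sub_right ihn.1
  set y := g ^ k with hydef
  set T := ρ y + ρ y⁻¹ with hTdef
  have hhT : Commute (ρ h) T := by
    induction hh using Subgroup.closure_induction with
    | mem x hx =>
      rcases hx with rfl | hx
      · exact (hT _ hat k).1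
      · rw [Set.mem_singleton_iff.1 hx]
        exact (hT _ hbt k).1
    | one => rw [map_one]; exact Commute.one_left _
    | mul x z _ _ hx hz => rw [map_mul]; exact hx.mul_left hz
    | inv x _ hx =>
      have e1 : ρ x⁻¹ * ρ x = 1 := by rw [← map_mul]; simp
      have e2 : ρ x * ρ x⁻¹ = 1 := by rw [← map_mul]; simp
      change ρ x⁻¹ * T = T * ρ x⁻¹
      calc ρ x⁻¹ * T = ρ x⁻¹ * (T * ρ x) * ρ x⁻¹ := by
            rw [mul_assoc, mul_assoc T, e2, mul_one]
        _ = ρ x⁻¹ * (ρ x * T) * ρ x⁻¹ := by rw [hx.eq]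
        _ = T * ρ x⁻¹ := by rw [← mul_assoc, e1, one_mul]
  have happ : ∀ (x z : G) (v : W), ρ x (ρ z v) = ρ (x * z) v := by
    intro x z v; rw [map_mul]; rfl
  have hw' : ρ y⁻¹ w = w := by
    conv_lhs => rw [← hw]
    rw [happ]; simp
  have hTw : T w = w + w := by
    change ρ y w + ρ y⁻¹ w = w + w
    rw [hw, hw']
  set v := ρ h w with hv
  have hTv : ρ y v + ρ y⁻¹ v = v + v := by
    have e := congrArg (fun φ : AddMonoid.End W => φ w) hhT.eq
    change ρ h (T w) = T (ρ h w) at e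
    rw [hTw, map_add] at e
    exact e.symm
  have h2 : ρ y (ρ y v) + v = ρ y v + ρ y v := by
    have e := congrArg (ρ y) hTv
    rw [map_add, map_add, happ y y⁻¹] at e
    simpa using e
  set u := ρ y v - v with hu
  have hyv : ρ y v = v + u := by rw [hu]; abel
  have hyu : ρ y u = u := by
    rw [hu, map_sub, sub_eq_sub_iff_add_eq_add, h2]
  have hpow : ∀ n : ℕ, ρ (y ^ n) v = v + n • u := by
    intro n
    induction n with
    | zero => simp
    | succ n ihn =>
      rw [pow_succ', ← happ, ihn, map_add, map_nsmul, hyu, hyv, succ_nsmul]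
      abel
  have h6 := hpow 5
  rw [hy, map_one] at h6
  have h7 : 5 • u = 0 := by
    have : v = v + 5 • u := h6
    simpa using this
  rw [hyv, h5 u h7, add_zero]

/-- The three-cycle (0 1 2). -/
def auxS1 : alternatingGroup (Fin 5) :=
  ⟨Equiv.swap 0 1 * Equiv.swap 1 2, by rw [Equiv.Perm.mem_alternatingGroup]; decide⟩
/-- The three-cycle (2 3 4). -/
def auxS2 : alternatingGroup (Fin 5) :=
  ⟨Equiv.swap 2 3 * Equiv.swap 3 4, by rw [Equiv.Perm.mem_alternatingGroup]; decide⟩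

set_option maxRecDepth 100000 in
theorem auxS1_ord : auxS1 ^ 3 = 1 ∧ auxS1 ≠ 1 := by decide
set_option maxRecDepth 100000 in
theorem auxS2_ord : auxS2 ^ 3 = 1 ∧ auxS2 ≠ 1 := by decide
set_option maxRecDepth 100000 in
theorem auxS12_ord : (auxS1 * auxS2) ^ 5 = 1 ∧ auxS1 * auxS2 ≠ 1 := by decide
set_option maxRecDepth 100000 in
theorem auxS2_inv : (auxS1 * auxS1 * auxS2 * auxS1 * auxS2) ^ 2 = 1 ∧
    auxS1 * auxS1 * auxS2 * auxS1 * auxS2 ≠ 1 := by decide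

theorem aux_card : Nat.card (alternatingGroup (Fin 5)) = 60 := by
  rw [nat_card_alternatingGroup]; simp; decide

set_option maxRecDepth 100000 in
theorem aux_perfect : commutator (alternatingGroup (Fin 5)) = ⊤ := by
  rcases (inferInstance : (commutator (alternatingGroup (Fin 5))).Normal).eq_bot_or_eq_top with h | h
  · exfalso
    rw [commutator_def, eq_bot_iff, Subgroup.commutator_le] at h
    have := h auxS1 trivial auxS2 trivial
    rw [Subgroup.mem_bot] at this
    revert this
    decide
  · exact h

theorem aux_gen (H : Subgroup (alternatingGroup (Fin 5))) (h1 : auxS1 ∈ H) (h2 : auxS2 ∈ H) :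
    H = ⊤ := by
  have hord : ∀ (r : ℕ) (x : alternatingGroup (Fin 5)), r.Prime → x ∈ H → x ^ r = 1 → x ≠ 1 →
      r ∣ Nat.card H := by
    intro r x hr hx hxr hx1
    have := Fact.mk hr
    have ho := orderOf_eq_prime hxr hx1
    rw [← ho, ← Subgroup.orderOf_mk x hx]
    exact orderOf_dvd_natCard _
  have d3 := hord 3 auxS1 (by norm_num) h1 auxS1_ord.1 auxS1_ord.2
  have d5 := hord 5 _ (by norm_num) (H.mul_mem h1 h2) auxS12_ord.1 auxS12_ord.2
  have d2 := hord 2 _ (by norm_num) (H.mul_mem (H.mul_mem (H.mul_mem (H.mul_mem h1 h1) h2) h1) h2)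
    auxS2_inv.1 auxS2_inv.2
  have hci := H.card_mul_index
  rw [aux_card] at hci
  have h30 : 30 ∣ Nat.card H := by omega
  obtain ⟨e, he⟩ := h30
  have hdi : H.index ∣ 2 := ⟨e, by
    rw [he] at hci
    have : 30 * (H.index * e) = 30 * 2 := by linarith
    exact (Nat.eq_of_mul_eq_mul_left (by norm_num) this).symm⟩
  rcases (Nat.dvd_prime Nat.prime_two).1 hdi with h | h
  · exact Subgroup.index_eq_one.1 h
  · rcases (Subgroup.normal_of_index_eq_two h).eq_bot_or_eq_top with hb | hb
    · rw [hb, Subgroup.card_bot] at d2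
      omega
    · exact hb

theorem aux_lift {G : Type*} [Group G] [Finite G] (f : G →* alternatingGroup (Fin 5))
    (hf : Function.Surjective f) (h3 : ¬ 3 ∣ Nat.card f.ker) (σ : alternatingGroup (Fin 5))
    (hσ : σ ^ 3 = 1) (hσ1 : σ ≠ 1) : ∃ a : G, orderOf a = 3 ∧ f a = σ := by
  obtain ⟨x, rfl⟩ := hf σ
  set n := Nat.card f.ker with hn
  have hx : (x ^ 3) ^ n = 1 := by
    have hm : x ^ 3 ∈ f.ker := by rw [MonoidHom.mem_ker, map_pow, hσ]
    have := pow_card_eq_one' (x := (⟨x ^ 3, hm⟩ : f.ker))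
    exact congrArg Subtype.val this
  have hfx : f (x ^ (n * n)) = f x := by
    rw [map_pow]
    have hmod : n * n % 3 = 1 := by
      have : n % 3 = 1 ∨ n % 3 = 2 := by omega
      rcases this with h | h <;> simp [Nat.mul_mod, h]
    rw [← Nat.div_add_mod (n * n) 3, hmod, pow_add, pow_mul, hσ]; simp
  refine ⟨x ^ (n * n), ?_, hfx⟩
  have : Fact (Nat.Prime 3) := ⟨by norm_num⟩
  apply orderOf_eq_prime
  · rw [← pow_mul, show n * n * 3 = 3 * n * n by ring, pow_mul, pow_mul, hx, one_pow]
  · intro h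
    rw [h, map_one] at hfx
    exact hσ1 hfx.symm

theorem aux_final {G W : Type*} [Group G] [Finite G] [AddCommGroup W]
    (ρ : G →* AddMonoid.End W) (f : G →* alternatingGroup (Fin 5))
    (hf : Function.Surjective f) (hk3 : ¬ 3 ∣ Nat.card f.ker) (hk5 : ¬ 5 ∣ Nat.card f.ker)
    (h5 : ∀ w : W, 5 • w = 0 → w = 0)
    (hfree : ∀ g : G, orderOf g = 3 → ∀ w, ρ g w = w → w = 0)
    (y : G) (hy : orderOf y = 5) (w : W) (hw : ρ y w = w) : w = 0 := by
  have i5 : Fact (Nat.Prime 5) := ⟨by norm_num⟩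
  have i3 : Fact (Nat.Prime 3) := ⟨by norm_num⟩
  have happ : ∀ (x z : G) (v : W), ρ x (ρ z v) = ρ (x * z) v := by
    intro x z v; rw [map_mul]; rfl
  obtain ⟨a, ha, hfa⟩ := aux_lift f hf hk3 auxS1 auxS1_ord.1 auxS1_ord.2
  obtain ⟨b, hb, hfb⟩ := aux_lift f hf hk3 auxS2 auxS2_ord.1 auxS2_ord.2
  set n := Nat.card f.ker with hn
  set g := a * b with hg
  have hfg : f g = auxS1 * auxS2 := by rw [hg, map_mul, hfa, hfb]
  have hg5 : (g ^ n) ^ 5 = 1 := by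
    have hm : g ^ 5 ∈ f.ker := by rw [MonoidHom.mem_ker, map_pow, hfg, auxS12_ord.1]
    have := pow_card_eq_one' (x := (⟨g ^ 5, hm⟩ : f.ker))
    rw [← pow_mul, mul_comm, pow_mul]
    exact congrArg Subtype.val this
  have hgo : orderOf (g ^ n) = 5 := by
    apply orderOf_eq_prime hg5
    intro h
    have h1 : (auxS1 * auxS2) ^ n = 1 := by rw [← hfg, ← map_pow, h, map_one]
    have h2 := orderOf_dvd_of_pow_eq_one h1
    rw [orderOf_eq_prime auxS12_ord.1 auxS12_ord.2] at h2
    exact hk5 h2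
  -- Sylow 5-subgroups have order 5
  have hcG : Nat.card G = n * 60 := by rw [← aux_card_ker f hf, aux_card]
  have hsyl : ∀ x : G, orderOf x = 5 → ∃ P : Sylow 5 G, (P : Subgroup G) = Subgroup.zpowers x := by
    intro x hx
    have hp : IsPGroup 5 (Subgroup.zpowers x) := by
      rw [IsPGroup.iff_card]
      exact ⟨1, by rw [Nat.card_zpowers, hx, pow_one]⟩
    obtain ⟨P, hP⟩ := hp.exists_le_sylow
    refine ⟨P, (Subgroup.eq_of_le_of_card_ge hP ?_).symm⟩
    rw [Nat.card_zpowers, hx]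
    obtain ⟨m, hm⟩ := IsPGroup.iff_card.1 P.isPGroup'
    rw [hm]
    have hd : 5 ^ m ∣ n * 60 := by rw [← hm, ← hcG]; exact Subgroup.card_subgroup_dvd_card _
    by_contra hlt
    have hm2 : 2 ≤ m := by
      by_contra h
      have : m = 0 ∨ m = 1 := by omega
      rcases this with rfl | rfl <;> simp at hlt
    have h25 : 25 ∣ n * 60 := (pow_dvd_pow 5 hm2).trans hd
    omega
  obtain ⟨P, hP⟩ := hsyl y hy
  obtain ⟨Q, hQ⟩ := hsyl _ hgo
  obtain ⟨c, hc⟩ := MulAction.exists_smul_eq G P Q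
  have hcy : c * y * c⁻¹ ∈ Subgroup.zpowers (g ^ n) := by
    rw [← hQ, ← hc]
    have : y ∈ (P : Subgroup G) := by rw [hP]; exact Subgroup.mem_zpowers y
    exact Subgroup.smul_mem_pointwise_smul y (MulAut.conj c) _ this
  rw [← mem_powers_iff_mem_zpowers] at hcy
  obtain ⟨j, hj⟩ := hcy
  have hj' : g ^ (n * j) = c * y * c⁻¹ := by rw [pow_mul]; exact hj
  set y' := g ^ (n * j) with hy'
  have hy'5 : y' ^ 5 = 1 := by
    rw [hj', conj_pow, ← hy, pow_orderOf_eq_one]; simp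
  have hfy : f y' ≠ 1 := by
    intro h
    have h1 : f y = 1 := by
      rw [hj'] at h
      simpa using h
    apply hk5
    have h1' : y ∈ f.ker := MonoidHom.mem_ker.2 h1
    have : orderOf (⟨y, h1'⟩ : f.ker) = 5 := (Subgroup.orderOf_mk y h1').trans hy
    rw [← this]
    exact orderOf_dvd_natCard _
  set v := ρ c w with hv
  have hv' : ρ y' v = v := by
    rw [hv, happ, hj', inv_mul_cancel_right, ← happ, hw]
  have hcore := aux_core ρ h5 hfree a b ha hb (n * j) hy'5 v hv'
  let S : Subgroup G :=
    { carrier := {x | ρ x v = v}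
      one_mem' := by simp
      mul_mem' := by
        intro x z hx hz
        change ρ (x * z) v = v
        rw [← happ, show ρ z v = v from hz, show ρ x v = v from hx]
      inv_mem' := by
        intro x hx
        change ρ x⁻¹ v = v
        conv_lhs => rw [← show ρ x v = v from hx]
        rw [happ]; simp }
  have hcl : (Subgroup.closure {a, b}).map f = ⊤ := by
    apply aux_gen
    · rw [← hfa]; exact Subgroup.mem_map_of_mem f (Subgroup.subset_closure (by simp))
    · rw [← hfb]; exact Subgroup.mem_map_of_mem f (Subgroup.subset_closure (by simp))
  have hncl : Subgroup.normalClosure {f y'} ≤ S.map f := by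
    rw [Subgroup.normalClosure, Subgroup.closure_le]
    intro x hx
    obtain ⟨z, hz, hzx⟩ := Group.mem_conjugatesOfSet_iff.1 hx
    rw [Set.mem_singleton_iff] at hz
    subst hz
    obtain ⟨d, rfl⟩ := isConj_iff.1 hzx
    have : d⁻¹ ∈ (Subgroup.closure {a, b}).map f := by rw [hcl]; trivial
    obtain ⟨h, hh, hhd⟩ := this
    refine ⟨h⁻¹ * y' * h, ?_, ?_⟩
    · change ρ (h⁻¹ * y' * h) v = v
      rw [← happ, ← happ, hcore h hh, happ]; simp
    · rw [map_mul, map_mul, map_inv, hhd, inv_inv]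
  have hStop : S.map f = ⊤ := by
    rcases (Subgroup.normalClosure_normal (s := {f y'})).eq_bot_or_eq_top with h | h
    · have : f y' ∈ Subgroup.normalClosure {f y'} := Subgroup.subset_normalClosure rfl
      rw [h] at this
      exact (hfy this).elim
    · rw [h] at hncl
      exact top_le_iff.1 hncl
  have hd3 : 3 ∣ Nat.card S := by
    have := aux_dvd_of_map_top f S hStop
    rw [aux_card] at this
    exact (by norm_num : 3 ∣ 60).trans this
  obtain ⟨x, hx⟩ := exists_prime_orderOf_dvd_card' 3 hd3
  have hv0 : v = 0 := hfree x ((Subgroup.orderOf_coe x).trans hx) v x.2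
  have : ρ c⁻¹ v = w := by rw [hv, happ]; simp
  rw [← this, hv0, map_zero]

/-- Let `N` be a solvable normal subgroup of a finite group `G` with `G/N ≅ A₅`,
let `p ∉ {2,3,5}` be a prime dividing `|N|`, and suppose `G` has no elements of
orders `3p` and `5p`. If, for a representation of `G` over a field of prime order
`q` coprime to `|G|`, all elements of order 3 act fixed point freely, then so do
all elements of order 5. -/
theorem order3_fpf_implies_order5_fpf
    (G : Type*) [Group G] [Finite G]
    (N : Subgroup G) (hNn : N.Normal) (hNs : IsSolvable N)
    (hquot : haveI := hNn
      Nonempty ((G ⧸ N) ≃* alternatingGroup (Fin 5)))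
    (p : ℕ) (hp : p.Prime) (hp' : p ∉ ({2, 3, 5} : Set ℕ)) (hpN : p ∣ Nat.card N)
    (h3p : ¬ ∃ g : G, orderOf g = 3 * p)
    (h5p : ¬ ∃ g : G, orderOf g = 5 * p)
    (q : ℕ) (hq : q.Prime) (hqG : ¬ q ∣ Nat.card G)
    (V : Type*) [AddCommGroup V] [Module (ZMod q) V] [Finite V]
    (ρ : Representation (ZMod q) G V)
    (h3 : ∀ g : G, orderOf g = 3 → ∀ v : V, ρ g v = v → v = 0) :
    ∀ g : G, orderOf g = 5 → ∀ v : V, ρ g v = v → v = 0 := by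
  obtain ⟨e⟩ := hquot
  let f : G →* alternatingGroup (Fin 5) := e.toMonoidHom.comp (QuotientGroup.mk' N)
  have hf : Function.Surjective f := e.surjective.comp (QuotientGroup.mk'_surjective N)
  have hker : f.ker = N := by
    ext x
    rw [MonoidHom.mem_ker]
    change e (x : G ⧸ N) = 1 ↔ _
    rw [map_eq_one_iff e e.injective, QuotientGroup.eq_one_iff]
  simp only [Set.mem_insert_iff, Set.mem_singleton_iff, not_or] at hp'
  have hpo : Odd p := hp.odd_of_ne_two hp'.1
  have hs : Group.IsSolvable f.ker := by rw [hker]; exact hNs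
  have hpk : p ∣ Nat.card f.ker := by rw [hker]; exact hpN
  have hk3 := aux_X aux_perfect 3 p (by norm_num) (by decide) hp hpo hp'.2.1
    (by rw [aux_card]; norm_num) _ G f rfl hf hs hpk h3p
  have hk5 := aux_X aux_perfect 5 p (by norm_num) (by decide) hp hpo hp'.2.2
    (by rw [aux_card]; norm_num) _ G f rfl hf hs hpk h5p
  have := Fact.mk hq
  have h5 : ∀ w : V, 5 • w = 0 → w = 0 := by
    intro w hw
    rw [← Nat.cast_smul_eq_nsmul (ZMod q), smul_eq_zero] at hw
    rcases hw with hw | hw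
    · exfalso
      rw [ZMod.natCast_eq_zero_iff] at hw
      apply hqG
      rw [← aux_card_ker f hf, aux_card]
      exact (hw.trans (by norm_num)).mul_left _
    · exact hw
  let ρ' : G →* AddMonoid.End V :=
    { toFun := fun g => (ρ g).toAddMonoidHom
      map_one' := by ext v; simp; rfl
      map_mul' := fun a b => by ext v; simp; rfl }
  intro g hg v hv
  exact aux_final ρ' f hf hk3 hk5 h5 h3 g hg v hv
end
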